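/- arXiv:1311.1108 — 2 statements merged into one kernel-verified Lean document; each statement's English description precedes it below -/
import Mathlib

section
/- For all positive integers k and r, every graph G with treewidth at least 2k²r² contains k pairwise vertex-disjoint subgraphs each containing θ_r as a minor. -/
open SimpleGraph

/-- `H` is a model of `θ_r` in `G`: its vertex set splits into two disjoint
connected parts with exactly `r` edges of `H` between them (so contracting
each part yields the multigraph with two vertices and `r` parallel edges). -/
def IsThetaModel {V : Type} (r : ℕ) (G : SimpleGraph V) (H : G.Subgraph) : Prop :=
  ∃ A B : Set V, A ∪ B = H.verts ∧ Disjoint A B ∧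
    (H.induce A).Connected ∧ (H.induce B).Connected ∧
    {e ∈ H.edgeSet | ∃ a ∈ A, ∃ b ∈ B, e = s(a, b)}.ncard = r

/-- `G` contains `k` pairwise vertex-disjoint models of `θ_r`. -/
def HasVertexPacking {V : Type} (r : ℕ) (G : SimpleGraph V) (k : ℕ) : Prop :=
  ∃ H : Fin k → G.Subgraph, (∀ i, IsThetaModel r G (H i)) ∧
    ∀ i j, i ≠ j → Disjoint (H i).verts (H j).verts

/-- A tree decomposition of `G` with index type `ι`. -/
structure TreeDecomp {V : Type} (G : SimpleGraph V) (ι : Type) where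
  tree : SimpleGraph ι
  isTree : tree.IsTree
  bag : ι → Set V
  mem_bag : ∀ v, ∃ i, v ∈ bag i
  edge_bag : ∀ ⦃u v⦄, G.Adj u v → ∃ i, u ∈ bag i ∧ v ∈ bag i
  conn_bag : ∀ v, (tree.induce {i | v ∈ bag i}).Connected

/-!
By the duality between tree decompositions and brambles, a graph of treewidth at least `2k²r²` has
a bramble of order greater than `2k²r²`. A path meeting every member of the bramble is cut into two
segments, each of which meets a subfamily of order at least `k²r²`. No set of fewer than `k²r²`
vertices separates the two segments, so by Menger's theorem they are joined by `k²r²` disjoint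
paths. By the Erdős–Szekeres theorem `kr` of these have their ends in the same or in the opposite
order along both segments. Cutting this sequence into `k` blocks of `r` consecutive paths and
adding to each block the intervals that it spans on the two segments gives the `k` models.
-/

section ReachableIn

variable {V : Type*} {G G' : SimpleGraph V} {U W : Set V} {u v w : V}

/-- Reachability inside `U`: some walk of `G` from `u` to `v` stays in `U`. Unlike reachability in
`G.induce U`, this is a relation on `V` itself, which lets `G` and `U` vary freely. -/
def ReachableIn (G : SimpleGraph V) (U : Set V) (u v : V) : Prop :=
  ∃ p : G.Walk u v, ∀ w ∈ p.support, w ∈ U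

namespace ReachableIn

lemma refl (hu : u ∈ U) : ReachableIn G U u u :=
  ⟨Walk.nil, by simpa using hu⟩

lemma symm (h : ReachableIn G U u v) : ReachableIn G U v u :=
  let ⟨p, hp⟩ := h
  ⟨p.reverse, by simpa using hp⟩

lemma trans (huv : ReachableIn G U u v) (hvw : ReachableIn G U v w) : ReachableIn G U u w := by
  obtain ⟨p, hp⟩ := huv
  obtain ⟨q, hq⟩ := hvw
  exact ⟨p.append q, fun x hx => ((Walk.mem_support_append_iff p q).1 hx).elim (hp x) (hq x)⟩

lemma of_adj (h : G.Adj u v) (hu : u ∈ U) (hv : v ∈ U) : ReachableIn G U u v :=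
  ⟨h.toWalk, by simp [hu, hv]⟩

lemma mono (hG : G ≤ G') (hU : U ⊆ W) (h : ReachableIn G U u v) : ReachableIn G' W u v :=
  let ⟨p, hp⟩ := h
  ⟨p.mapLe hG, by simpa using fun w hw => hU (hp w hw)⟩

lemma mem_left (h : ReachableIn G U u v) : u ∈ U :=
  let ⟨p, hp⟩ := h
  hp u p.start_mem_support

lemma mem_right (h : ReachableIn G U u v) : v ∈ U :=
  h.symm.mem_left

lemma exists_adj_mem_notMem {R : Set V} (h : ReachableIn G U u v) (hu : u ∈ R) (hv : v ∉ R) :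
    ∃ x ∈ R, ∃ y ∉ R, G.Adj x y ∧ x ∈ U ∧ y ∈ U := by
  obtain ⟨p, hp⟩ := h
  obtain ⟨d, hd, hx, hy⟩ := p.exists_boundary_dart R hu hv
  exact ⟨d.fst, hx, d.snd, hy, d.adj, hp _ (p.dart_fst_mem_support_of_mem_darts hd),
    hp _ (p.dart_snd_mem_support_of_mem_darts hd)⟩

end ReachableIn

lemma reachableIn_support_of_mem_support (p : G.Walk u v) (hw : w ∈ p.support) :
    ReachableIn G {x | x ∈ p.support} u w := by
  classical
  exact ⟨p.takeUntil w hw, fun _ hx => p.support_takeUntil_subset_support hw hx⟩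

lemma reachableIn_of_induce_connected (h : (G.induce U).Connected) (hu : u ∈ U) (hv : v ∈ U) :
    ReachableIn G U u v := by
  rw [connected_induce_iff, Subgraph.connected_iff_forall_exists_walk_subgraph] at h
  obtain ⟨p, hp⟩ := h.2 hu hv
  exact ⟨p, fun w hw => hp.1 (p.mem_verts_toSubgraph.2 hw)⟩

lemma induce_connected_of_reachableIn (hu : u ∈ U) (h : ∀ v ∈ U, ReachableIn G U u v) :
    (G.induce U).Connected :=
  induce_connected_of_patches u hu fun hv =>
    let ⟨p, hp⟩ := h _ hv
    ⟨_, hp, p.start_mem_support, p.end_mem_support, p.connected_induce_support _ _⟩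

lemma induce_setOf_reachableIn_connected (hu : u ∈ U) :
    (G.induce {v | ReachableIn G U u v}).Connected := by
  refine induce_connected_of_reachableIn (ReachableIn.refl hu) fun v ⟨p, hp⟩ => ⟨p, fun w hw => ?_⟩
  exact (reachableIn_support_of_mem_support p hw).mono le_rfl hp

end ReachableIn

section Brambles

variable {V : Type*}

/-- Two vertex sets touch if they intersect or are joined by an edge. -/
def Touches (G : SimpleGraph V) (C D : Set V) : Prop :=
  ∃ u ∈ C, ∃ v ∈ D, u = v ∨ G.Adj u v

/-- A bramble: a family of pairwise touching connected vertex sets. -/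
structure IsBramble (G : SimpleGraph V) (F : Set (Set V)) : Prop where
  connected : ∀ C ∈ F, (G.induce C).Connected
  touches : ∀ C ∈ F, ∀ D ∈ F, Touches G C D

/-- The order of the family `F`, i.e. the least size of a set meeting all its members, is at
least `N`. (For infinite `V` the junk value `ncard X = 0` of an infinite `X` would interfere.) -/
def HasOrderGE (F : Set (Set V)) (N : ℕ) : Prop :=
  ∀ X : Set V, X.ncard < N → ∃ C ∈ F, Disjoint C X

end Brambles

/-! ### Brambles from large treewidth -/

section Duality

variable {V : Type*} {G : SimpleGraph V} {N : ℕ} {F : Set (Set V)}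
  {A B C C₁ C₂ D E X : Set V}

/-- No edge leaves `D` except towards `X`, which is disjoint from `D`. -/
structure IsEnclosed (G : SimpleGraph V) (D X : Set V) : Prop where
  disjoint : Disjoint D X
  mem_union_of_adj : ∀ ⦃u v⦄, u ∈ D → G.Adj u v → v ∈ D ∪ X

/-- `PartialDecomp G N F D X` says that the subgraph on `D ∪ X` has a partial tree decomposition
with root bag `X` and bags of size at most `N`: below a leaf, a set that contains no member of `F`
may be left undecomposed. For `F` the family of all connected sets nothing is left out, while for
`F` a bramble of order greater than `N` there is no such decomposition of `G`. -/
inductive PartialDecomp (G : SimpleGraph V) (N : ℕ) (F : Set (Set V)) : Set V → Set V → Prop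
  | leaf {D X : Set V} (enclosed : IsEnclosed G D X) (card_le : X.ncard ≤ N)
      (free : ∀ C ∈ F, ¬ C ⊆ D) : PartialDecomp G N F D X
  | shift {D Y X Z : Set V} (decomp : PartialDecomp G N F D Y) (card_le : X.ncard ≤ N)
      (eq_union : Z = D ∪ Y \ X) (disjoint : Disjoint D X)
      (mem_union_of_adj : ∀ ⦃u v⦄, u ∈ Y \ X → G.Adj u v → v ∈ D ∪ Y) : PartialDecomp G N F Z X
  | join {D E X Z : Set V} (left : PartialDecomp G N F D X) (right : PartialDecomp G N F E X)
      (eq_union : Z = D ∪ E) (disjoint : Disjoint D E) : PartialDecomp G N F Z X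

/-- `(A, B)` is a separation of `G` with `C₁` strictly on the side of `A` and `C₂` strictly on the
side of `B`. -/
structure IsSeparation (G : SimpleGraph V) (C₁ C₂ A B : Set V) : Prop where
  mem_or_mem : ∀ v, v ∈ A ∨ v ∈ B
  mem_of_adj : ∀ ⦃u v⦄, G.Adj u v → u ∉ B → v ∈ A
  disjoint_left : Disjoint C₁ B
  disjoint_right : Disjoint C₂ A

/-- A separation of `C₁` from `C₂` of least possible order. -/
structure IsMinSeparation (G : SimpleGraph V) (C₁ C₂ A B : Set V) : Prop
    extends IsSeparation G C₁ C₂ A B where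
  ncard_le : ∀ ⦃A' B'⦄, IsSeparation G C₁ C₂ A' B' → (A ∩ B).ncard ≤ (A' ∩ B').ncard

lemma IsSeparation.symm (h : IsSeparation G C₁ C₂ A B) : IsSeparation G C₂ C₁ B A where
  mem_or_mem v := (h.mem_or_mem v).symm
  mem_of_adj u v huv hu := by
    by_contra hv
    exact hu (h.mem_of_adj huv.symm hv)
  disjoint_left := h.disjoint_right
  disjoint_right := h.disjoint_left

lemma IsMinSeparation.symm (h : IsMinSeparation G C₁ C₂ A B) : IsMinSeparation G C₂ C₁ B A where
  toIsSeparation := h.toIsSeparation.symm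
  ncard_le A' B' h' := by
    rw [Set.inter_comm B, Set.inter_comm A']
    exact h.ncard_le h'.symm

lemma exists_isSeparation_of_not_touches (h : ¬ Touches G C₁ C₂) :
    ∃ A B, IsSeparation G C₁ C₂ A B := by
  refine ⟨C₁ ∪ {v | ∃ u ∈ C₁, G.Adj u v}, C₁ᶜ, by grind, fun u v huv hu => ?_,
    disjoint_compl_right, ?_⟩
  · exact Or.inr ⟨u, Set.notMem_compl_iff.1 hu, huv⟩
  · refine Set.disjoint_left.2 fun v hv hv' => h ?_
    rcases hv' with hv' | ⟨u, hu, huv⟩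
    · exact ⟨v, hv', v, hv, Or.inl rfl⟩
    · exact ⟨u, hu, v, hv, Or.inr huv⟩

lemma exists_isMinSeparation_of_not_touches (h : ¬ Touches G C₁ C₂) :
    ∃ A B, IsMinSeparation G C₁ C₂ A B := by
  obtain ⟨A₀, B₀, h₀⟩ := exists_isSeparation_of_not_touches h
  obtain ⟨⟨A, B⟩, hsep, hmin⟩ := exists_minimalFor_of_wellFoundedLT
    (fun S : Set V × Set V => IsSeparation G C₁ C₂ S.1 S.2) (fun S => (S.1 ∩ S.2).ncard)
    ⟨(A₀, B₀), h₀⟩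
  exact ⟨A, B, hsep, fun A' B' h' => (le_total _ _).elim id (hmin (j := (A', B')) h')⟩

/-- Otherwise the corner separation `(A \ D, B ∪ D ∪ X)` would have smaller order than `(A, B)`. -/
lemma IsMinSeparation.ncard_uncross_le [Finite V] (hAB : IsMinSeparation G C₁ C₂ A B)
    (h : IsEnclosed G D X) (hD : Disjoint C₁ D) (hX : Disjoint C₁ X) :
    (X ∩ B ∪ D ∩ A ∩ B).ncard ≤ X.ncard := by
  have hcorner : IsSeparation G C₁ C₂ (A \ D) (B ∪ D ∪ X) := by
    obtain ⟨hcover, hadj, hC₁, hC₂⟩ := hAB.toIsSeparation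
    refine ⟨by grind, fun u v huv hu => ?_, by grind, by grind⟩
    have := hadj huv
    have := @h.mem_union_of_adj v u
    have := huv.symm
    grind
  have hsub : (A \ D) ∩ (B ∪ D ∪ X) ⊆ (A ∩ B) \ D ∪ X \ B := by grind
  have hle := (hAB.ncard_le hcorner).trans (Set.ncard_le_ncard hsub (Set.toFinite _))
  have hunion := Set.ncard_union_le ((A ∩ B) \ D) (X \ B)
  have hAB_split := Set.ncard_inter_add_ncard_sdiff_eq_ncard (A ∩ B) D (Set.toFinite _)
  have hX_split := Set.ncard_inter_add_ncard_sdiff_eq_ncard X B (Set.toFinite _)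
  have hunion' := Set.ncard_union_le (X ∩ B) (A ∩ B ∩ D)
  rw [show D ∩ A ∩ B = A ∩ B ∩ D by grind]
  lia

namespace PartialDecomp

lemma ncard_le (h : PartialDecomp G N F D X) : X.ncard ≤ N := by
  induction h <;> assumption

lemma isEnclosed (h : PartialDecomp G N F D X) : IsEnclosed G D X := by
  induction h with
  | leaf enclosed => exact enclosed
  | shift _ _ eq_union disjoint mem_union_of_adj ih =>
    have hadj := ih.mem_union_of_adj
    subst eq_union
    refine ⟨disjoint.union_left disjoint_sdiff_self_left, fun u v hu huv => ?_⟩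
    grind
  | join _ _ eq_union _ ihD ihE =>
    subst eq_union
    refine ⟨ihD.disjoint.union_left ihE.disjoint, fun u v hu huv => ?_⟩
    have := @ihD.mem_union_of_adj u v
    have := @ihE.mem_union_of_adj u v
    grind

lemma uncross [Finite V] (hAB : IsMinSeparation G C₁ C₂ A B) (h : PartialDecomp G N F D X)
    (hD : Disjoint C₁ D) (hX : Disjoint C₁ X) :
    PartialDecomp G N F (D \ A) (X ∩ B ∪ D ∩ A ∩ B) := by
  have hcover := hAB.mem_or_mem
  have hadj := hAB.toIsSeparation.symm.mem_of_adj
  have hcard := (hAB.ncard_uncross_le h.isEnclosed hD hX).trans h.ncard_le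
  induction h with
  | @leaf D X enclosed _ free =>
    obtain ⟨hDX, hleave⟩ := enclosed
    refine leaf ⟨by grind, fun u v hu huv => ?_⟩ hcard
      fun C hC hCD => free C hC (hCD.trans Set.sdiff_subset)
    have := hadj huv
    grind
  | @shift D Y X Z decomp _ eq_union disjoint mem_union_of_adj ih =>
    have hDY := decomp.isEnclosed.disjoint
    have hD' : Disjoint C₁ D := by grind
    have hY : Disjoint C₁ Y := by grind
    refine shift (ih hD' hY ((hAB.ncard_uncross_le decomp.isEnclosed hD' hY).trans
      decomp.ncard_le)) hcard (by grind) (by grind) fun u v hu huv => ?_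
    have := hadj huv
    grind
  | @join D E X Z left right eq_union disjoint ihD ihE =>
    have hDX := left.isEnclosed.disjoint
    have hEX := right.isEnclosed.disjoint
    have hD' : Disjoint C₁ D := by grind
    have hE : Disjoint C₁ E := by grind
    have hleft := ihD hD' hX ((hAB.ncard_uncross_le left.isEnclosed hD' hX).trans left.ncard_le)
    have hright := ihE hE hX ((hAB.ncard_uncross_le right.isEnclosed hE hX).trans right.ncard_le)
    exact join (D := D \ A) (E := E \ A) (shift hleft hcard (by grind) (by grind) (by grind))
      (shift hright hcard (by grind) (by grind) (by grind)) (by grind) (by grind)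

lemma restrict_compl [Finite V] (hAB : IsMinSeparation G C₁ C₂ A B) (hX : Disjoint C₁ X)
    (h : PartialDecomp G N F (C₁ ∪ X)ᶜ X) : PartialDecomp G N F Aᶜ (A ∩ B) := by
  have hcover := hAB.mem_or_mem
  have hC₁ := hAB.disjoint_left
  have h' := h.uncross hAB (by grind) hX
  refine h'.shift ((Set.ncard_le_ncard (fun x hx => by grind) (Set.toFinite _)).trans h'.ncard_le)
    (by grind) (by grind) fun u v hu huv => ?_
  have := hAB.toIsSeparation.symm.mem_of_adj huv
  grind

lemma leaf_sdiff (hC : C.Nonempty) (hup : ∀ ⦃u v⦄, u ∈ C → G.Adj u v → insert v C ∈ F)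
    (enclosed : IsEnclosed G D X) (card_le : X.ncard ≤ N) (free : ∀ B ∈ F \ {C}, ¬ B ⊆ D)
    (hCD : C ⊆ D) : PartialDecomp G N F (D \ C) X := by
  obtain ⟨x, hx⟩ := hC
  refine leaf ⟨enclosed.disjoint.mono_left Set.sdiff_subset, fun u v hu huv => ?_⟩ card_le
    fun B hB hBD => free B ⟨hB, ?_⟩ (hBD.trans Set.sdiff_subset)
  · have hv : v ∉ C := fun hv => free _ ⟨hup hv huv.symm, by grind⟩ (Set.insert_subset hu.1 hCD)
    have := enclosed.mem_union_of_adj hu.1 huv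
    grind
  · rintro rfl
    exact (hBD hx).2 hx

/-- The partial decomposition may be turned around at the leaf that contains `C`, since below this
leaf only `C` itself is forbidden. -/
lemma or_exists_reroot (hC : C.Nonempty) (hup : ∀ ⦃u v⦄, u ∈ C → G.Adj u v → insert v C ∈ F)
    (h : PartialDecomp G N (F \ {C}) D X) :
    PartialDecomp G N F D X ∨ C ⊆ D ∧ (PartialDecomp G N F (D ∪ X)ᶜ X →
      ∃ Y, Disjoint C Y ∧ PartialDecomp G N F (C ∪ Y)ᶜ Y) := by
  induction h with
  | @leaf D X enclosed card_le free =>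
    by_cases hCD : C ⊆ D
    · refine Or.inr ⟨hCD, fun h => ⟨X, enclosed.disjoint.mono_left hCD, ?_⟩⟩
      have := enclosed.disjoint
      exact join h (leaf_sdiff hC hup enclosed card_le free hCD) (by grind) (by grind)
    · exact Or.inl (leaf enclosed card_le fun B hB hBD => free B ⟨hB, by grind⟩ hBD)
  | @shift D Y X Z decomp card_le eq_union disjoint mem_union_of_adj ih =>
    obtain ⟨hDY, hadj⟩ := decomp.isEnclosed
    rcases ih with ih | ⟨hCD, ih⟩
    · exact Or.inl (ih.shift card_le eq_union disjoint mem_union_of_adj)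
    · refine Or.inr ⟨by grind, fun h => ih ?_⟩
      refine h.shift decomp.ncard_le (by grind) (by grind) fun u v hu huv => ?_
      have := huv.symm
      have := @mem_union_of_adj v u
      have := @hadj v u
      grind
  | @join D E X Z left right eq_union disjoint ihD ihE =>
    have hDX := left.isEnclosed.disjoint
    have hEX := right.isEnclosed.disjoint
    rcases ihD with ihD | ⟨hCD, ihD⟩
    · rcases ihE with ihE | ⟨hCE, ihE⟩
      · exact Or.inl (join ihD ihE eq_union disjoint)
      · exact Or.inr ⟨by grind, fun h => ihE (join h ihD (by grind) (by grind))⟩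
    · have hE : PartialDecomp G N F E X := ihE.resolve_right fun ⟨hCE, _⟩ =>
        hC.ne_empty (Set.subset_empty_iff.1 (disjoint hCD hCE))
      exact Or.inr ⟨by grind, fun h => ihD (join h hE (by grind) (by grind))⟩

end PartialDecomp

/-- An upward closed family of connected sets relative to which `G` has no partial decomposition
into bags of size at most `N`. The minimal such families are brambles. -/
structure IsObstruction (G : SimpleGraph V) (N : ℕ) (F : Set (Set V)) : Prop where
  connected : ∀ C ∈ F, (G.induce C).Connected
  mem_of_subset : ∀ ⦃C D⦄, C ∈ F → (G.induce D).Connected → C ⊆ D → D ∈ F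
  not_partialDecomp : ¬ PartialDecomp G N F Set.univ ∅

lemma IsObstruction.insert_mem (h : IsObstruction G N F) (hC : C ∈ F) {u v : V} (hu : u ∈ C)
    (huv : G.Adj u v) : insert v C ∈ F := by
  refine h.mem_of_subset hC ?_ (Set.subset_insert v C)
  rw [Set.insert_eq, Set.union_comm]
  exact connected_induce_union (h.connected C hC).preconnected
    Preconnected.of_subsingleton hu rfl huv

lemma IsObstruction.exists_partialDecomp_around (hF : Minimal (IsObstruction G N) F)
    (hC : Minimal (· ∈ F) C) : ∃ Y, Disjoint C Y ∧ PartialDecomp G N F (C ∪ Y)ᶜ Y := by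
  obtain ⟨hobs, hmin⟩ := hF
  have hdecomp : PartialDecomp G N (F \ {C}) Set.univ ∅ := by
    by_contra hnot
    refine (hmin ⟨fun D hD => hobs.connected D hD.1, fun D E hD hE hDE => ?_, hnot⟩
      Set.sdiff_subset hC.prop).2 rfl
    refine ⟨hobs.mem_of_subset hD.1 hE hDE, ?_⟩
    rintro rfl
    exact hD.2 (hDE.antisymm (hC.le_of_le hD.1 hDE))
  have hne : ∀ D ∈ F, D.Nonempty := fun D hD =>
    Set.nonempty_coe_sort.1 (hobs.connected D hD).nonempty
  obtain ⟨-, h⟩ := (hdecomp.or_exists_reroot (hne C hC.prop)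
    fun _ _ => hobs.insert_mem hC.prop).resolve_left hobs.not_partialDecomp
  refine h (.leaf ⟨Set.disjoint_empty _, by simp⟩ (by simp) fun D hD hsub => ?_)
  exact (hne D hD).ne_empty (by simpa using hsub)

lemma PartialDecomp.of_compl (h : PartialDecomp G N F Xᶜ X) : PartialDecomp G N F Set.univ ∅ :=
  h.shift (by simp) (by grind) (Set.disjoint_empty _) (by grind)

lemma IsObstruction.touches [Finite V] (hF : Minimal (IsObstruction G N) F) (hC : C ∈ F)
    (hD : D ∈ F) : Touches G C D := by
  obtain ⟨C₁, hC₁, hminC₁⟩ := (Set.toFinite F).exists_le_minimal hC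
  obtain ⟨C₂, hC₂, hminC₂⟩ := (Set.toFinite F).exists_le_minimal hD
  suffices Touches G C₁ C₂ from
    let ⟨u, hu, v, hv, huv⟩ := this
    ⟨u, hC₁ hu, v, hC₂ hv, huv⟩
  by_contra hnot
  obtain ⟨A, B, hAB⟩ := exists_isMinSeparation_of_not_touches hnot
  obtain ⟨X₁, hX₁, hdecomp₁⟩ := exists_partialDecomp_around hF hminC₁
  obtain ⟨X₂, hX₂, hdecomp₂⟩ := exists_partialDecomp_around hF hminC₂
  have hA := hdecomp₁.restrict_compl hAB hX₁
  have hB := hdecomp₂.restrict_compl hAB.symm hX₂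
  rw [Set.inter_comm] at hB
  have hcover := hAB.mem_or_mem
  have h : PartialDecomp G N F (A ∩ B)ᶜ (A ∩ B) := hA.join hB (by grind) (by grind)
  exact hF.prop.not_partialDecomp h.of_compl

lemma IsObstruction.hasOrderGE (hF : IsObstruction G N F) : HasOrderGE F (N + 1) := by
  intro X hX
  by_contra! hnot
  have hdecomp : PartialDecomp G N F Xᶜ X := .leaf ⟨by grind, by grind⟩ (by lia)
    fun C hC hCX => hnot C hC (Set.subset_compl_iff_disjoint_right.1 hCX)
  exact hF.not_partialDecomp hdecomp.of_compl

lemma exists_isBramble_of_not_partialDecomp [Finite V]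
    (h : ¬ PartialDecomp G N {C | (G.induce C).Connected} Set.univ ∅) :
    ∃ F, IsBramble G F ∧ HasOrderGE F (N + 1) := by
  obtain ⟨F, -, hF⟩ := (Set.toFinite {F | IsObstruction G N F}).exists_le_minimal
    (show IsObstruction G N {C | (G.induce C).Connected} from
      ⟨fun _ => id, fun _ _ _ hD _ => hD, h⟩)
  exact ⟨F, ⟨hF.prop.connected, fun _ hC _ => IsObstruction.touches hF hC⟩, hF.prop.hasOrderGE⟩

end Duality

section TreeGluing

variable {α β : Type*} {S : SimpleGraph α} {T : SimpleGraph β}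

lemma reachable_map_of_forall_adj {f : α → β} (hf : ∀ ⦃x y⦄, S.Adj x y → T.Reachable (f x) (f y))
    {x y : α} (h : S.Reachable x y) : T.Reachable (f x) (f y) := by
  obtain ⟨p⟩ := h
  induction p with
  | nil => rfl
  | cons hadj _ ih => exact (hf hadj).trans ih

lemma isAcyclic_sum (hS : S.IsAcyclic) (hT : T.IsAcyclic) : (S ⊕g T).IsAcyclic := by
  rw [isAcyclic_iff_forall_adj_isBridge] at hS hT ⊢
  -- Collapsing the other summand to an endpoint of the edge retracts onto the edge's own summand.
  rintro (u | u) (v | v) huv hreach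
  · refine hS (v := u) (w := v) (by simpa using huv)
      (reachable_map_of_forall_adj (f := Sum.elim id fun _ => u) ?_ hreach)
    rintro (x | x) (y | y) hxy
    · exact Adj.reachable (by simpa using hxy)
    all_goals simp at hxy ⊢
  · simp at huv
  · simp at huv
  · refine hT (v := u) (w := v) (by simpa using huv)
      (reachable_map_of_forall_adj (f := Sum.elim (fun _ => u) id) ?_ hreach)
    rintro (x | x) (y | y) hxy
    case inr.inr => exact Adj.reachable (by simpa using hxy)
    all_goals simp at hxy ⊢

lemma isTree_sum_sup_edge (hS : S.IsTree) (hT : T.IsTree) (a : α) (b : β) :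
    ((S ⊕g T) ⊔ edge (Sum.inl a) (Sum.inr b)).IsTree :=
  ⟨hS.connected.sum_sup_edge hT.connected, IsAcyclic.sup_edge_of_not_reachable
    (not_reachable_sum_inl_inr a b) (isAcyclic_sum hS.isAcyclic hT.isAcyclic)⟩

lemma induce_image_connected (f : S →g T) {C : Set α} (hC : (S.induce C).Connected) :
    (T.induce (f '' C)).Connected := by
  obtain ⟨⟨x, hx⟩⟩ := hC.nonempty
  refine induce_connected_of_reachableIn (Set.mem_image_of_mem f hx) ?_
  rintro _ ⟨y, hy, rfl⟩
  obtain ⟨p, hp⟩ := reachableIn_of_induce_connected hC hx hy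
  refine ⟨p.map f, fun w hw => ?_⟩
  rw [Walk.support_map] at hw
  obtain ⟨z, hz, rfl⟩ := List.mem_map.1 hw
  exact ⟨z, hp z hz, rfl⟩

lemma setOf_mem_sumElim {V : Type*} {f : α → Set V} {g : β → Set V} (v : V) :
    {i | v ∈ Sum.elim f g i} = Sum.inl '' {i | v ∈ f i} ∪ Sum.inr '' {j | v ∈ g j} := by
  ext (i | i) <;> simp

lemma induce_sum_sup_edge_connected {a : α} {b : β} {C : Set α} {D : Set β}
    (hC : C.Nonempty → (S.induce C).Connected) (hD : D.Nonempty → (T.induce D).Connected)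
    (hne : C.Nonempty ∨ D.Nonempty) (hab : C.Nonempty → D.Nonempty → a ∈ C ∧ b ∈ D) :
    (((S ⊕g T) ⊔ edge (Sum.inl a) (Sum.inr b)).induce (Sum.inl '' C ∪ Sum.inr '' D)).Connected := by
  have hinl := fun h => induce_image_connected
    ((Hom.ofLE le_sup_left).comp (Embedding.sumInl.toHom : S →g S ⊕g T) :
      S →g (S ⊕g T) ⊔ edge (Sum.inl a) (Sum.inr b)) (hC h)
  have hinr := fun h => induce_image_connected
    ((Hom.ofLE le_sup_left).comp (Embedding.sumInr.toHom : T →g S ⊕g T) :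
      T →g (S ⊕g T) ⊔ edge (Sum.inl a) (Sum.inr b)) (hD h)
  rcases C.eq_empty_or_nonempty with rfl | hCne
  · rw [Set.image_empty, Set.empty_union]
    exact hinr (hne.resolve_left Set.not_nonempty_empty)
  rcases D.eq_empty_or_nonempty with rfl | hDne
  · rw [Set.image_empty, Set.union_empty]
    exact hinl hCne
  obtain ⟨ha, hb⟩ := hab hCne hDne
  exact connected_induce_union (hinl hCne).preconnected (hinr hDne).preconnected
    (Set.mem_image_of_mem _ ha) (Set.mem_image_of_mem _ hb) (by simp [edge])

end TreeGluing

section RootedDecomp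

variable {V : Type*} {G : SimpleGraph V} {N : ℕ} {U W D X Y : Set V}

/-- A tree decomposition of `G.induce U` with a distinguished node whose bag is `X`. -/
structure RootedDecomp (G : SimpleGraph V) (U X : Set V) (ι : Type) where
  tree : SimpleGraph ι
  isTree : tree.IsTree
  bag : ι → Set V
  root : ι
  bag_root : bag root = X
  bag_subset : ∀ i, bag i ⊆ U
  edge_bag : ∀ ⦃u v⦄, u ∈ U → v ∈ U → G.Adj u v → ∃ i, u ∈ bag i ∧ v ∈ bag i
  conn_bag : ∀ v ∈ U, (tree.induce {i | v ∈ bag i}).Connected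

/-- The subgraph on `U` has a rooted tree decomposition with root bag `X` and bags of size at
most `N`. -/
def HasRootedDecomp (G : SimpleGraph V) (N : ℕ) (U X : Set V) : Prop :=
  ∃ (ι : Type) (T : RootedDecomp G U X ι), ∀ i, (T.bag i).ncard ≤ N

/-- The decomposition with a single bag. -/
def RootedDecomp.single (G : SimpleGraph V) (X : Set V) : RootedDecomp G X X Unit where
  tree := ⊥
  isTree := IsTree.of_subsingleton
  bag _ := X
  root := ()
  bag_root := rfl
  bag_subset _ := subset_rfl
  edge_bag _ _ hu hv _ := ⟨(), hu, hv⟩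
  conn_bag _ hv := by
    have : Nonempty {_i : Unit | _ ∈ X} := ⟨(), hv⟩
    exact Connected.of_subsingleton

/-- Two decompositions glued by an edge between their roots. -/
def RootedDecomp.glue {α β : Type} (S : RootedDecomp G U X α) (T : RootedDecomp G W Y β)
    (hUW : U ∩ W ⊆ X ∩ Y) (hadj : ∀ ⦃u v⦄, u ∈ U → v ∈ W → G.Adj u v → v ∈ U ∨ u ∈ W) :
    RootedDecomp G (U ∪ W) X (α ⊕ β) where
  tree := (S.tree ⊕g T.tree) ⊔ edge (Sum.inl S.root) (Sum.inr T.root)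
  isTree := isTree_sum_sup_edge S.isTree T.isTree _ _
  bag := Sum.elim S.bag T.bag
  root := Sum.inl S.root
  bag_root := S.bag_root
  bag_subset := Sum.rec (fun i => (S.bag_subset i).trans Set.subset_union_left)
    fun i => (T.bag_subset i).trans Set.subset_union_right
  edge_bag u v hu hv huv := by
    have hS : u ∈ U → v ∈ U → ∃ i, u ∈ Sum.elim S.bag T.bag i ∧ v ∈ Sum.elim S.bag T.bag i :=
      fun hu hv => let ⟨i, hi⟩ := S.edge_bag hu hv huv; ⟨Sum.inl i, hi⟩
    have hT : u ∈ W → v ∈ W → ∃ i, u ∈ Sum.elim S.bag T.bag i ∧ v ∈ Sum.elim S.bag T.bag i :=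
      fun hu hv => let ⟨i, hi⟩ := T.edge_bag hu hv huv; ⟨Sum.inr i, hi⟩
    have huv' := @hadj u v
    have hvu := @hadj v u
    have := huv.symm
    grind
  conn_bag v hv := by
    have hU : {i | v ∈ S.bag i}.Nonempty ↔ v ∈ U :=
      ⟨fun ⟨i, hi⟩ => S.bag_subset i hi,
        fun hv => Set.nonempty_coe_sort.1 (S.conn_bag v hv).nonempty⟩
    have hW : {i | v ∈ T.bag i}.Nonempty ↔ v ∈ W :=
      ⟨fun ⟨i, hi⟩ => T.bag_subset i hi,
        fun hv => Set.nonempty_coe_sort.1 (T.conn_bag v hv).nonempty⟩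
    rw [setOf_mem_sumElim]
    refine induce_sum_sup_edge_connected (fun h => S.conn_bag v (hU.1 h))
      (fun h => T.conn_bag v (hW.1 h)) (hv.imp hU.2 hW.2) fun hv hv' => ?_
    obtain ⟨hvX, hvY⟩ := hUW ⟨hU.1 hv, hW.1 hv'⟩
    exact ⟨S.bag_root.superset hvX, T.bag_root.superset hvY⟩

lemma HasRootedDecomp.single (h : X.ncard ≤ N) : HasRootedDecomp G N X X :=
  ⟨Unit, RootedDecomp.single G X, fun _ => h⟩

lemma HasRootedDecomp.glue (hU : HasRootedDecomp G N U X) (hW : HasRootedDecomp G N W Y)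
    (hUW : U ∩ W ⊆ X ∩ Y) (hadj : ∀ ⦃u v⦄, u ∈ U → v ∈ W → G.Adj u v → v ∈ U ∨ u ∈ W) :
    HasRootedDecomp G N (U ∪ W) X := by
  obtain ⟨α, S, hS⟩ := hU
  obtain ⟨β, T, hT⟩ := hW
  exact ⟨α ⊕ β, S.glue T hUW hadj, Sum.rec hS hT⟩

lemma PartialDecomp.hasRootedDecomp
    (h : PartialDecomp G N {C | (G.induce C).Connected} D X) : HasRootedDecomp G N (D ∪ X) X := by
  induction h with
  | @leaf D X _ card_le free =>
    have hD : D = ∅ := Set.eq_empty_of_forall_notMem fun x hx =>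
      free {x} Connected.of_subsingleton (Set.singleton_subset_iff.2 hx)
    simpa [hD] using HasRootedDecomp.single card_le
  | @shift D Y X Z decomp card_le eq_union disjoint mem_union_of_adj ih =>
    rw [show Z ∪ X = X ∪ (D ∪ Y) by grind]
    refine (HasRootedDecomp.single card_le).glue ih (by grind) fun u v _ hv huv => ?_
    have := @decomp.isEnclosed.mem_union_of_adj v u
    have := @mem_union_of_adj v u
    have := huv.symm
    grind
  | @join D E X Z left right eq_union disjoint ihD ihE =>
    rw [show Z ∪ X = (D ∪ X) ∪ (E ∪ X) by grind]
    refine ihD.glue ihE (by grind) fun u v hu _ huv => ?_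
    have := @left.isEnclosed.mem_union_of_adj u v
    grind

end RootedDecomp

/-- A tree decomposition of the whole graph, from a rooted one. -/
def RootedDecomp.toTreeDecomp {V : Type} {G : SimpleGraph V} {X : Set V} {ι : Type}
    (T : RootedDecomp G Set.univ X ι) : TreeDecomp G ι where
  tree := T.tree
  isTree := T.isTree
  bag := T.bag
  mem_bag v := Set.nonempty_coe_sort.1 (T.conn_bag v trivial).nonempty
  edge_bag _ _ := T.edge_bag trivial trivial
  conn_bag v := T.conn_bag v trivial

theorem exists_isBramble_of_forall_treeDecomp {V : Type} [Finite V] {G : SimpleGraph V} {N : ℕ}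
    (h : ∀ (ι : Type) (D : TreeDecomp G ι), ∃ i, N < (D.bag i).ncard) :
    ∃ F, IsBramble G F ∧ HasOrderGE F (N + 1) := by
  refine exists_isBramble_of_not_partialDecomp fun hdecomp => ?_
  have hrooted := hdecomp.hasRootedDecomp
  rw [Set.univ_union] at hrooted
  obtain ⟨ι, T, hT⟩ := hrooted
  obtain ⟨i, hi⟩ := h ι T.toTreeDecomp
  exact (hT i).not_gt hi

/-! ### Menger's theorem -/

section Menger

variable {V : Type*} {G G' : SimpleGraph V} {A B S T U : Set V} {ι κ : Type*}

/-- `S` separates `A` from `B`: every walk from `A` to `B` meets `S`. -/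
def Separates (G : SimpleGraph V) (A B S : Set V) : Prop :=
  ∀ a ∈ A, ∀ b ∈ B, ¬ ReachableIn G Sᶜ a b

lemma Separates.symm (h : Separates G A B S) : Separates G B A S :=
  fun b hb a ha hba => h a ha b hb hba.symm

/-- A family of pairwise disjoint paths from `A` to `B`, each meeting `A` and `B` only in its first
and last vertex. -/
structure Linkage (G : SimpleGraph V) (A B : Set V) (ι : Type*) where
  src : ι → V
  tgt : ι → V
  walk : ∀ i, G.Walk (src i) (tgt i)
  isPath : ∀ i, (walk i).IsPath
  src_mem : ∀ i, src i ∈ A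
  tgt_mem : ∀ i, tgt i ∈ B
  eq_src : ∀ ⦃i v⦄, v ∈ (walk i).support → v ∈ A → v = src i
  eq_tgt : ∀ ⦃i v⦄, v ∈ (walk i).support → v ∈ B → v = tgt i
  eq_of_mem_support : ∀ ⦃i j v⦄, v ∈ (walk i).support → v ∈ (walk j).support → i = j

/-- The paths of a linkage chosen by an injective map. -/
def Linkage.reindex (L : Linkage G A B ι) (e : κ ↪ ι) : Linkage G A B κ where
  src := L.src ∘ e
  tgt := L.tgt ∘ e
  walk j := L.walk (e j)
  isPath _ := L.isPath _
  src_mem _ := L.src_mem _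
  tgt_mem _ := L.tgt_mem _
  eq_src _ _ h := L.eq_src h
  eq_tgt _ _ h := L.eq_tgt h
  eq_of_mem_support _ _ _ hi hj := e.injective (L.eq_of_mem_support hi hj)

lemma Linkage.src_injective (L : Linkage G A B ι) : Function.Injective L.src := fun i j hij =>
  L.eq_of_mem_support (L.walk i).start_mem_support (by rw [hij]; exact (L.walk j).start_mem_support)

lemma Linkage.tgt_injective (L : Linkage G A B ι) : Function.Injective L.tgt := fun i j hij =>
  L.eq_of_mem_support (L.walk i).end_mem_support (by rw [hij]; exact (L.walk j).end_mem_support)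

lemma exists_trimmed_walk {a b : V} (w : G.Walk a b) (ha : a ∈ A) (hb : b ∈ B) :
    ∃ a' ∈ A, ∃ b' ∈ B, ∃ p : G.Walk a' b', p.IsPath ∧ p.support ⊆ w.support ∧
      (∀ v ∈ p.support, v ∈ A → v = a') ∧ ∀ v ∈ p.support, v ∈ B → v = b' := by
  classical
  let IsCandidate (q : Σ a' b', G.Walk a' b') : Prop :=
    q.1 ∈ A ∧ q.2.1 ∈ B ∧ q.2.2.support ⊆ w.support
  obtain ⟨⟨a', b', p⟩, ⟨ha', hb', hp⟩, hmin⟩ := exists_minimalFor_of_wellFoundedLT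
    IsCandidate (fun q => q.2.2.length) ⟨⟨a, b, w⟩, ha, hb, List.Subset.refl _⟩
  have hle : ∀ {a'' b''} (q : G.Walk a'' b''), a'' ∈ A → b'' ∈ B → q.support ⊆ p.support →
      p.length ≤ q.length := fun q ha'' hb'' hq => (le_total _ _).elim id
    (hmin (j := ⟨_, _, q⟩) ⟨ha'', hb'', List.Subset.trans hq hp⟩)
  refine ⟨a', ha', b', hb', p, ?_, hp, fun v hv hvA => ?_, fun v hv hvB => ?_⟩
  · rw [← p.bypass_eq_self_of_length_le_length_bypass
      (hle _ ha' hb' p.support_bypass_subset_support)]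
    exact p.bypass_isPath
  · by_contra hne
    exact (hle _ hvA hb' (p.support_dropUntil_subset_support hv)).not_gt
      (Walk.length_dropUntil_lt_length hv hne)
  · by_contra hne
    exact (hle _ ha' hvB (p.support_takeUntil_subset_support hv)).not_gt
      (Walk.length_takeUntil_lt_length hv hne)

lemma nonempty_linkage_of_walks {a b : ι → V} (w : ∀ i, G.Walk (a i) (b i)) (ha : ∀ i, a i ∈ A)
    (hb : ∀ i, b i ∈ B)
    (hdisj : ∀ ⦃i j v⦄, v ∈ (w i).support → v ∈ (w j).support → i = j) :
    Nonempty (Linkage G A B ι) := by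
  choose a' ha' b' hb' p hpath hsub hA hB using fun i => exists_trimmed_walk (w i) (ha i) (hb i)
  exact ⟨a', b', p, hpath, ha', hb', hA, hB, fun i j v hi hj => hdisj (hsub i hi) (hsub j hj)⟩

lemma Linkage.reachableIn_compl (L : Linkage G A B ι) (hSB : S ⊆ B) {i : ι} {v : V}
    (hv : v ∈ (L.walk i).support) (hvS : v ∉ S) : ReachableIn G Sᶜ (L.src i) v := by
  classical
  refine ⟨(L.walk i).takeUntil v hv, fun u hu huS => ?_⟩
  obtain rfl := L.eq_tgt ((L.walk i).support_takeUntil_subset_support hv hu) (hSB huS)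
  refine Walk.endpoint_notMem_support_takeUntil (L.isPath i) hv ?_ hu
  rintro rfl
  exact hvS huS

variable {e : Sym2 V} {x y : V}

lemma eq_of_adj_of_not_adj_deleteEdges {u v : V} (huv : G.Adj u v)
    (h : ¬ (G.deleteEdges {e}).Adj u v) : s(u, v) = e := by
  by_contra hne
  exact h (by simpa [huv] using hne)

lemma exists_boundary_of_not_reachableIn_deleteEdges {a b : V} (h : ReachableIn G U a b)
    (h' : ¬ ReachableIn (G.deleteEdges {e}) U a b) :
    ∃ u v, s(u, v) = e ∧ ReachableIn (G.deleteEdges {e}) U a u := by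
  obtain ⟨u, hu, v, hv, huv, huS, hvS⟩ := h.exists_adj_mem_notMem
    (R := {v | ReachableIn (G.deleteEdges {e}) U a v}) (.refl h.mem_left) h'
  exact ⟨u, v, eq_of_adj_of_not_adj_deleteEdges huv fun huv' =>
    hv (hu.trans (.of_adj huv' huS hvS)), hu⟩

lemma Separates.exists_reachableIn_of_not_separates (hS : Separates (G.deleteEdges {e}) A B S)
    (hSG : ¬ Separates G A B S) :
    ∃ x y, s(x, y) = e ∧ (∃ a ∈ A, ReachableIn (G.deleteEdges {e}) Sᶜ a x) ∧
      ∃ b ∈ B, ReachableIn (G.deleteEdges {e}) Sᶜ b y := by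
  simp only [Separates, not_forall, not_not] at hSG
  obtain ⟨a, ha, b, hb, hab⟩ := hSG
  obtain ⟨u, v, rfl, hau⟩ :=
    exists_boundary_of_not_reachableIn_deleteEdges hab (hS a ha b hb)
  obtain ⟨u', v', huv', hbu'⟩ :=
    exists_boundary_of_not_reachableIn_deleteEdges hab.symm (hS.symm b hb a ha)
  have hne : u' ≠ u := fun h => hS a ha b hb (hau.trans (h ▸ hbu'.symm))
  have hv : u' = v := by grind
  exact ⟨u, v, rfl, ⟨a, ha, hau⟩, b, hb, hv ▸ hbu'⟩

/-- A walk of `G` from `A` avoiding `T` cannot use the edge `xy`: it reaches neither `x`, by the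
choice of `T`, nor `y`, which `S` cuts off from `A`. -/
lemma Separates.of_separates_insert {b : V} (hS : Separates (G.deleteEdges {e}) A B S)
    (he : s(x, y) = e) (hb : b ∈ B) (hby : ReachableIn (G.deleteEdges {e}) Sᶜ b y)
    (hT : Separates (G.deleteEdges {e}) A (insert x S) T) : Separates G A B T := by
  intro a ha b' hb' hab'
  have havoid : ∀ v, ReachableIn (G.deleteEdges {e}) Tᶜ a v →
      ReachableIn (G.deleteEdges {e}) Sᶜ a v := fun v hv =>
    (reachableIn_of_induce_connected (induce_setOf_reachableIn_connected hv.mem_left)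
      (.refl hv.mem_left) hv).mono le_rfl
      fun w hw hwS => hT a ha w (Set.mem_insert_of_mem x hwS) hw
  obtain ⟨u, v, huv, hau⟩ := exists_boundary_of_not_reachableIn_deleteEdges hab'
    fun h => hS a ha b' hb' (havoid b' h)
  have hux : u ≠ x := fun h => hT a ha x (Set.mem_insert x S) (h ▸ hau)
  have huy : u = y := by grind
  exact hS a ha b hb ((havoid u hau).trans (huy ▸ hby.symm))

lemma Linkage.range_tgt_eq [Finite B] [Fintype ι] (L : Linkage G A B ι)
    (h : B.ncard ≤ Fintype.card ι) : Set.range L.tgt = B :=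
  Set.eq_of_subset_of_ncard_le (Set.range_subset_iff.2 L.tgt_mem)
    (by rwa [Set.ncard_range_of_injective L.tgt_injective, Nat.card_eq_fintype_card])

lemma Linkage.reachableIn_support_union (hle : G' ≤ G) (P : Linkage G' A S ι)
    (Q : Linkage G' B T κ) {i : ι} {j : κ} (h : P.tgt i = Q.tgt j ∨ G.Adj (P.tgt i) (Q.tgt j)) :
    ReachableIn G ({v | v ∈ (P.walk i).support} ∪ {v | v ∈ (Q.walk j).support})
      (P.src i) (Q.src j) := by
  have hP := ReachableIn.mono hle
    (Set.subset_union_left (t := {v | v ∈ (Q.walk j).support}))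
    (reachableIn_support_of_mem_support (P.walk i) (P.walk i).end_mem_support)
  have hQ := ReachableIn.mono hle
    (Set.subset_union_right (s := {v | v ∈ (P.walk i).support}))
    (reachableIn_support_of_mem_support (Q.walk j) (Q.walk j).end_mem_support)
  rcases h with h | h
  · exact hP.trans (Eq.subst (motive := ReachableIn G _ _) h.symm hQ).symm
  · exact (hP.trans (.of_adj h hP.mem_right hQ.mem_right)).trans hQ.symm

lemma Separates.mem_of_mem_support (hS : Separates G A B S) (P : Linkage G A (insert x S) ι)
    (Q : Linkage G B (insert y S) κ) {i : ι} {j : κ} {v : V} (hi : v ∈ (P.walk i).support)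
    (hj : v ∈ (Q.walk j).support) : v ∈ S := by
  by_contra hv
  exact hS _ (P.src_mem i) _ (Q.src_mem j)
    ((P.reachableIn_compl (Set.subset_insert x S) hi hv).trans
      (Q.reachableIn_compl (Set.subset_insert y S) hj hv).symm)

/-- The two linkages meet only in `S`, so their paths can be joined at `S` and along `xy`. -/
lemma Separates.nonempty_linkage_of_linkage_insert [Finite V] [Fintype ι] (hle : G' ≤ G)
    (hxy : G.Adj x y) (hy : y ∉ S) (hι : S.ncard + 1 ≤ Fintype.card ι) (hS : Separates G' A B S)
    (P : Linkage G' A (insert x S) ι) (Q : Linkage G' B (insert y S) ι) :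
    Nonempty (Linkage G A B ι) := by
  have hQ : Set.range Q.tgt = insert y S :=
    Q.range_tgt_eq (by rwa [Set.ncard_insert_of_notMem hy])
  have hmatch : ∀ i, ∃ j, P.tgt i = Q.tgt j ∧ P.tgt i ∈ S ∨ P.tgt i = x ∧ Q.tgt j = y := fun i => by
    rcases P.tgt_mem i with h | h
    · obtain ⟨j, hj⟩ := hQ.superset (Set.mem_insert y S)
      exact ⟨j, .inr ⟨h, hj⟩⟩
    · obtain ⟨j, hj⟩ := hQ.superset (Set.mem_insert_of_mem y h)
      exact ⟨j, .inl ⟨hj.symm, h⟩⟩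
  choose σ hσ using hmatch
  choose w hw using fun i => P.reachableIn_support_union hle Q (j := σ i)
    ((hσ i).imp And.left fun h => by rwa [h.1, h.2])
  have hmeet : ∀ {i j v}, v ∈ (P.walk i).support → v ∈ (Q.walk (σ j)).support → i = j :=
    fun {i j v} hi hj => by
      have hvS := hS.mem_of_mem_support P Q hi hj
      have hvP := P.eq_tgt hi (Set.mem_insert_of_mem x hvS)
      have hvQ := Q.eq_tgt hj (Set.mem_insert_of_mem y hvS)
      exact P.tgt_injective (by grind)
  refine nonempty_linkage_of_walks w P.src_mem (fun i => Q.src_mem _) fun i j v hi hj => ?_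
  rcases hw i v hi with hi | hi <;> rcases hw j v hj with hj | hj
  · exact P.eq_of_mem_support hi hj
  · exact hmeet hi hj
  · exact (hmeet hj hi).symm
  · have htgt := congrArg Q.tgt (Q.eq_of_mem_support hi hj)
    exact P.tgt_injective (by grind)

lemma Linkage.nonempty_of_le (hle : G' ≤ G) (L : Linkage G' A B ι) :
    Nonempty (Linkage G A B ι) :=
  nonempty_linkage_of_walks (fun i => (L.walk i).mapLe hle) L.src_mem L.tgt_mem
    fun i j v hi hj => L.eq_of_mem_support (by simpa using hi) (by simpa using hj)

lemma separates_bot_inter : Separates (⊥ : SimpleGraph V) A B (A ∩ B) := by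
  rintro a ha b hb ⟨w, hw⟩
  cases w with
  | nil => exact hw a (by simp) ⟨ha, hb⟩
  | cons h _ => exact h.elim

lemma nonempty_linkage_inter {k : ℕ} [Finite V] (h : k ≤ (A ∩ B).ncard) :
    Nonempty (Linkage G A B (Fin k)) := by
  obtain ⟨e⟩ : Nonempty (Fin k ↪ ↥(A ∩ B)) := by
    have := Fintype.ofFinite ↥(A ∩ B)
    exact Function.Embedding.nonempty_of_card_le
      (by rwa [Fintype.card_fin, ← Nat.card_eq_fintype_card, Nat.card_coe_set_eq])
  refine nonempty_linkage_of_walks (fun i => (Walk.nil : G.Walk (e i : V) (e i)))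
    (fun i => (e i).2.1) (fun i => (e i).2.2) fun i j v hi hj => ?_
  rw [Walk.mem_support_nil_iff] at hi hj
  exact e.injective (Subtype.ext (hi.symm.trans hj))

lemma deleteEdges_singleton_lt (he : e ∈ G.edgeSet) : G.deleteEdges {e} < G := by
  rw [← edgeSet_ssubset_edgeSet, edgeSet_deleteEdges]
  exact Set.sdiff_singleton_ssubset.2 he

theorem nonempty_linkage_of_forall_separates [Finite V] {k : ℕ}
    (h : ∀ S, Separates G A B S → k ≤ S.ncard) : Nonempty (Linkage G A B (Fin k)) := by
  induction G using WellFoundedLT.induction generalizing A B with | ind G ih => ?_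
  obtain rfl | hG := eq_or_ne G ⊥
  · exact nonempty_linkage_inter (h _ separates_bot_inter)
  obtain ⟨e, he⟩ := edgeSet_nonempty.2 hG
  have hlt := deleteEdges_singleton_lt he
  by_cases hsmall : ∃ S, Separates (G.deleteEdges {e}) A B S ∧ S.ncard < k
  swap
  · push Not at hsmall
    exact (ih _ hlt hsmall).elim (·.nonempty_of_le hlt.le)
  obtain ⟨S, hS, hSk⟩ := hsmall
  obtain ⟨x, y, hxy, ⟨a, ha, hax⟩, b, hb, hby⟩ :=
    hS.exists_reachableIn_of_not_separates fun hSG => hSk.not_ge (h S hSG)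
  have hA : ∀ T, Separates (G.deleteEdges {e}) A (insert x S) T → k ≤ T.ncard :=
    fun T hT => h T (hS.of_separates_insert hxy hb hby hT)
  have hB : ∀ T, Separates (G.deleteEdges {e}) B (insert y S) T → k ≤ T.ncard :=
    fun T hT => h T (hS.symm.of_separates_insert (Sym2.eq_swap.trans hxy) ha hax hT).symm
  obtain ⟨P⟩ := ih _ hlt hA
  obtain ⟨Q⟩ := ih _ hlt hB
  exact hS.nonempty_linkage_of_linkage_insert hlt.le (by rwa [← mem_edgeSet, hxy]) hby.mem_right
    (by simpa) P Q

end Menger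

/-! ### Two linked segments of a path -/

section LinkedSegments

variable {V : Type*} {G : SimpleGraph V} {F : Set (Set V)} {C D S : Set V}

lemma IsBramble.reachableIn_union (hF : IsBramble G F) (hC : C ∈ F) (hD : D ∈ F) {u v : V}
    (hu : u ∈ C) (hv : v ∈ D) : ReachableIn G (C ∪ D) u v := by
  obtain ⟨x, hx, y, hy, hxy⟩ := hF.touches C hC D hD
  have hux := (reachableIn_of_induce_connected (hF.connected C hC) hu hx).mono le_rfl
    (Set.subset_union_left (t := D))
  have hyv := (reachableIn_of_induce_connected (hF.connected D hD) hy hv).mono le_rfl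
    (Set.subset_union_right (s := C))
  rcases hxy with rfl | hxy
  · exact hux.trans hyv
  · exact (hux.trans (.of_adj hxy hux.mem_right hyv.mem_left)).trans hyv

lemma exists_longer_isPath {a b c : V} {p : G.Walk a b} (hp : p.IsPath)
    (hC : ∀ v ∈ p.support, v ∈ C → v = b) (hD : ∀ v ∈ p.support, v ∉ D)
    (hbc : ReachableIn G (C ∪ D) b c) (hc : c ∈ D) :
    ∃ d ∈ D, ∃ q : G.Walk a d, q.IsPath ∧ p.length < q.length ∧
      ∀ v ∈ q.support, v ∈ D → v = d := by
  obtain ⟨w, hw⟩ := hbc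
  obtain ⟨b', hb', d, hd, q, hq, hqw, -, hqD⟩ := exists_trimmed_walk w (Set.mem_singleton b) hc
  obtain rfl : b' = b := hb'
  have hbd : b' ≠ d := fun h => hD b' p.end_mem_support (h ▸ hd)
  have hnodup := hq.support_nodup
  rw [← Walk.cons_tail_support, List.nodup_cons] at hnodup
  refine ⟨d, hd, p.append q, ?_, ?_, fun v hv hvD => ?_⟩
  · rw [Walk.isPath_def, Walk.support_append, List.nodup_append']
    refine ⟨hp.support_nodup, hnodup.2, fun v hvp hvq => ?_⟩
    rcases hw v (hqw (List.mem_of_mem_tail hvq)) with hvC | hvD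
    · exact hnodup.1 (hC v hvp hvC ▸ hvq)
    · exact hD v hvp hvD
  · have := q.not_nil_iff_lt_length.1 (Walk.not_nil_of_ne hbd)
    rw [Walk.length_append]
    lia
  · exact ((Walk.mem_support_append_iff p q).1 hv).elim (fun h => (hD v h hvD).elim)
      fun h => hqD v h hvD

lemma IsBramble.exists_isPath_meeting [Finite V] (hF : IsBramble G F) (hne : F.Nonempty) :
    ∃ (a b : V) (p : G.Walk a b), p.IsPath ∧ ∀ C ∈ F, ∃ v ∈ p.support, v ∈ C := by
  by_contra! hmiss
  have hlong : ∀ n : ℕ, ∃ (a b : V) (p : G.Walk a b), p.IsPath ∧ n ≤ p.length ∧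
      ∃ C ∈ F, b ∈ C ∧ ∀ v ∈ p.support, v ∈ C → v = b := by
    intro n
    induction n with
    | zero =>
      obtain ⟨C, hC⟩ := hne
      obtain ⟨x, hx⟩ := Set.nonempty_coe_sort.1 (hF.connected C hC).nonempty
      exact ⟨x, x, Walk.nil, Walk.IsPath.nil, Nat.zero_le _, C, hC, hx, by simp⟩
    | succ n ih =>
      obtain ⟨a, b, p, hp, hn, C, hC, hb, hpC⟩ := ih
      obtain ⟨D, hD, hpD⟩ := hmiss a b p hp
      obtain ⟨c, hc⟩ := Set.nonempty_coe_sort.1 (hF.connected D hD).nonempty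
      obtain ⟨d, hd, q, hq, hlt, hqD⟩ :=
        exists_longer_isPath hp hpC hpD (hF.reachableIn_union hC hD hb hc) hc
      exact ⟨a, d, q, hq, by lia, D, hD, hd, hqD⟩
  have := Fintype.ofFinite V
  obtain ⟨a, b, p, hp, hn, -⟩ := hlong (Fintype.card V)
  exact hn.not_gt hp.length_lt

lemma IsBramble.not_separates (hF : IsBramble G F) (hC : C ∈ F) (hD : D ∈ F) {A B : Set V}
    (hCA : (C ∩ A).Nonempty) (hDB : (D ∩ B).Nonempty) (hCS : Disjoint C S) (hDS : Disjoint D S) :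
    ¬ Separates G A B S := by
  obtain ⟨a, haC, haA⟩ := hCA
  obtain ⟨b, hbD, hbB⟩ := hDB
  exact fun h => h a haA b hbB ((hF.reachableIn_union hC hD haC hbD).mono le_rfl
    (hCS.union_left hDS).subset_compl_right)

lemma HasOrderGE.exists_initial_segment {m n : ℕ} {f : ℕ → V} (hF : HasOrderGE F m) (hm : 0 < m)
    (hf : ∀ C ∈ F, ∃ i ≤ n, f i ∈ C) :
    ∃ s ≤ n, HasOrderGE {C ∈ F | ∃ i ≤ s, f i ∈ C} m ∧
      ∃ X : Set V, X.ncard < m ∧ ∀ C ∈ F, Disjoint C X → ∀ i < s, f i ∉ C := by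
  let InitialOrderGE (s : ℕ) : Prop := HasOrderGE {C ∈ F | ∃ i < s, f i ∈ C} m
  have hlarge : ∀ s, n < s → InitialOrderGE s := fun s hs X hX => by
    obtain ⟨C, hC, hCX⟩ := hF X hX
    obtain ⟨i, hi, hiC⟩ := hf C hC
    exact ⟨C, ⟨hC, i, hi.trans_lt hs, hiC⟩, hCX⟩
  have hzero : ¬ InitialOrderGE 0 := fun h => by
    obtain ⟨C, ⟨-, i, hi, -⟩, -⟩ := h ∅ (by simpa)
    exact Nat.not_lt_zero i hi
  obtain ⟨s, hs, hs'⟩ :=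
    Nat.exists_not_and_succ_of_not_zero_of_exists hzero ⟨n + 1, hlarge _ n.lt_succ_self⟩
  simp only [InitialOrderGE, HasOrderGE, not_forall] at hs
  obtain ⟨X, hX, hnot⟩ := hs
  exact ⟨s, by_contra fun h => hnot (hlarge s (not_le.1 h) X hX),
    by simpa only [InitialOrderGE, Nat.lt_succ_iff] using hs', X, hX,
    fun C hC hCX i hi hiC => hnot ⟨C, ⟨hC, i, hi, hiC⟩, hCX⟩⟩

/-- Cut the path where the members of the bramble meeting its initial segment first have order
`m`; then the members missing that segment have order at least `m` as well. -/
theorem IsBramble.exists_linked_segments [Finite V] (hF : IsBramble G F) {m : ℕ} (hm : 0 < m)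
    (hord : HasOrderGE F (2 * m)) :
    ∃ (a b : V) (p : G.Walk a b) (s : ℕ), p.IsPath ∧ s ≤ p.length ∧
      Nonempty (Linkage G (p.getVert '' Set.Iic s) (p.getVert '' Set.Ioc s p.length) (Fin m)) := by
  obtain ⟨C₀, hC₀, -⟩ := hord ∅ (by simpa)
  obtain ⟨a, b, p, hp, hmeet⟩ := hF.exists_isPath_meeting ⟨C₀, hC₀⟩
  have hmeet : ∀ C ∈ F, ∃ i ≤ p.length, p.getVert i ∈ C := fun C hC => by
    obtain ⟨v, hv, hvC⟩ := hmeet C hC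
    obtain ⟨i, rfl, hi⟩ := Walk.mem_support_iff_exists_getVert.1 hv
    exact ⟨i, hi, hvC⟩
  obtain ⟨s, hs, hinit, X, hX, hXmeet⟩ :=
    HasOrderGE.exists_initial_segment (fun Y hY => hord Y (by lia)) hm hmeet
  refine ⟨a, b, p, s, hp, hs, nonempty_linkage_of_forall_separates fun S hS => ?_⟩
  by_contra! hlt
  obtain ⟨C, ⟨hC, i, hi, hiC⟩, hCS⟩ := hinit S hlt
  obtain ⟨D, hD, hDSX⟩ := hord (insert (p.getVert s) (S ∪ X)) (by
    have := Set.ncard_insert_le (p.getVert s) (S ∪ X)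
    have := Set.ncard_union_le S X
    lia)
  rw [Set.disjoint_insert_right, Set.disjoint_union_right] at hDSX
  obtain ⟨hsD, hDS, hDX⟩ := hDSX
  obtain ⟨j, hj, hjD⟩ := hmeet D hD
  have hsj : s < j := by
    rcases lt_trichotomy s j with hsj | rfl | hjs
    · exact hsj
    · exact (hsD hjD).elim
    · exact (hXmeet D hD hDX j hjs hjD).elim
  exact absurd hS (hF.not_separates hC hD ⟨_, hiC, i, hi, rfl⟩ ⟨_, hjD, j, ⟨hsj, hj⟩, rfl⟩ hCS hDS)

end LinkedSegments

/-! ### The Erdős–Szekeres theorem -/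

section ErdosSzekeres

variable {ι α β γ : Type*}

/-- If there is no chain of `n + 1` elements, the height function is a rank function. -/
lemma exists_strictMono_comp_or_exists_rank [Preorder γ] (h : ι → γ) (n : ℕ) :
    (∃ e : Fin (n + 1) → ι, StrictMono (h ∘ e)) ∨
      ∃ L : ι → Fin n, ∀ i j, h i < h j → L i < L j := by
  let : Preorder ι := Preorder.lift h
  by_cases hlong : ∃ i : ι, (n : ℕ∞) ≤ Order.height i
  · obtain ⟨i, hi⟩ := hlong
    obtain ⟨s, -, rfl⟩ := Order.exists_series_of_le_height i hi
    exact .inl ⟨s, s.strictMono⟩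
  · push Not at hlong
    refine .inr ⟨fun i => ⟨(Order.height i).toNat, ?_⟩, fun i j hij => ?_⟩
    · exact_mod_cast (ENat.natCast_toNat (hlong i).ne_top).trans_lt (hlong i)
    · have hlt : Order.height i < Order.height j :=
        Order.height_strictMono (show i < j from hij) (hlong i).lt_top
      rw [← ENat.natCast_toNat (hlong i).ne_top, ← ENat.natCast_toNat (hlong j).ne_top] at hlt
      exact_mod_cast hlt

theorem exists_strictMono_or_strictAnti_comp [Fintype ι] [LinearOrder α] [LinearOrder β]
    {f : ι → α} {g : ι → β} (hf : f.Injective) (hg : g.Injective) {m n : ℕ}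
    (hcard : m * n < Fintype.card ι) :
    (∃ e : Fin (m + 1) → ι, StrictMono (f ∘ e) ∧ StrictMono (g ∘ e)) ∨
      ∃ e : Fin (n + 1) → ι, StrictMono (f ∘ e) ∧ StrictAnti (g ∘ e) := by
  rcases exists_strictMono_comp_or_exists_rank (fun i => (f i, g i)) m with ⟨e, he⟩ | ⟨L, hL⟩
  · have hinj : e.Injective := he.injective.of_comp
    exact .inl ⟨e, (monotone_fst.comp he.monotone).strictMono_of_injective (hf.comp hinj),
      (monotone_snd.comp he.monotone).strictMono_of_injective (hg.comp hinj)⟩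
  rcases exists_strictMono_comp_or_exists_rank (fun i => (f i, OrderDual.toDual (g i))) n with
    ⟨e, he⟩ | ⟨M, hM⟩
  · have hinj : e.Injective := he.injective.of_comp
    exact .inr ⟨e, (monotone_fst.comp he.monotone).strictMono_of_injective (hf.comp hinj),
      (monotone_snd.comp he.monotone).strictMono_of_injective
        (OrderDual.toDual.injective.comp (hg.comp hinj))⟩
  have hrank : ∀ i j, f i < f j → (L i, M i) ≠ (L j, M j) := fun i j hij hLM => by
    rcases le_total (g i) (g j) with hle | hle
    · exact (hL i j (Prod.mk_lt_mk_of_lt_of_le hij hle)).ne (congrArg Prod.fst hLM)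
    · exact (hM i j (Prod.mk_lt_mk_of_lt_of_le hij hle)).ne (congrArg Prod.snd hLM)
  have hinj : Function.Injective fun i => (L i, M i) := fun i j hij => by
    by_contra hne
    exact (hf.ne hne).lt_or_gt.elim (hrank i j · hij) (hrank j i · hij.symm)
  simpa [hcard.not_ge] using Fintype.card_le_of_injective _ hinj

lemma exists_comp_strictMono_or_strictAnti_of_sq_le_card {κ : Type*} [LinearOrder κ] [Fintype κ]
    [Fintype ι] [LinearOrder α] [LinearOrder β] {f : ι → α} {g : ι → β} (hf : f.Injective)
    (hg : g.Injective) (hcard : Fintype.card κ ^ 2 ≤ Fintype.card ι) :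
    ∃ e : κ → ι, StrictMono (f ∘ e) ∧ (StrictMono (g ∘ e) ∨ StrictAnti (g ∘ e)) := by
  cases hκ : Fintype.card κ with
  | zero =>
    have := Fintype.card_eq_zero_iff.1 hκ
    exact ⟨isEmptyElim, Subsingleton.strictMono _, .inl (Subsingleton.strictMono _)⟩
  | succ n =>
    let o := (Fintype.orderIsoFinOfCardEq κ hκ).symm
    rw [hκ] at hcard
    rcases exists_strictMono_or_strictAnti_comp hf hg (m := n) (n := n) (by nlinarith) with
      ⟨e, hfe, hge⟩ | ⟨e, hfe, hge⟩
    · exact ⟨e ∘ o, hfe.comp o.strictMono, .inl (hge.comp o.strictMono)⟩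
    · exact ⟨e ∘ o, hfe.comp o.strictMono, .inr (hge.comp_strictMono o.strictMono)⟩

end ErdosSzekeres

/-! ### Theta models from linkages -/

section ConnectedSubsets

variable {V : Type*} {G : SimpleGraph V} {A : Set V}

lemma subgraph_induce_connected_of_le {H : G.Subgraph} (h : (G.induce A).Connected)
    (hle : (⊤ : G.Subgraph).induce A ≤ H) : (H.induce A).Connected :=
  (connected_induce_iff.1 h).mono
    (⟨subset_rfl, fun _ _ hab => ⟨hab.1, hab.2.1, hle.2 hab⟩⟩ :
      (⊤ : G.Subgraph).induce A ≤ H.induce A) rfl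

lemma induce_union_support_connected {ι : Type*} {x y : ι → V} (w : ∀ i, G.Walk (x i) (y i))
    (hA : (G.induce A).Connected) (hx : ∀ i, x i ∈ A) :
    (G.induce (A ∪ {v | ∃ i, v ∈ (w i).support})).Connected := by
  obtain ⟨a, ha⟩ := Set.nonempty_coe_sort.1 hA.nonempty
  have hreach : ∀ v ∈ A, ReachableIn G (A ∪ {v | ∃ i, v ∈ (w i).support}) a v := fun v hv =>
    (reachableIn_of_induce_connected hA ha hv).mono le_rfl Set.subset_union_left
  refine induce_connected_of_reachableIn (.inl ha) fun v hv => ?_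
  rcases hv with hv | ⟨i, hv⟩
  · exact hreach v hv
  · exact (hreach (x i) (hx i)).trans <|
      (reachableIn_support_of_mem_support (w i) hv).mono le_rfl fun u hu => .inr ⟨i, hu⟩

lemma end_notMem_support_dropLast {u v : V} {p : G.Walk u v} (hp : p.IsPath) (hnil : ¬ p.Nil) :
    v ∉ p.dropLast.support := by
  have hnodup := hp.support_nodup
  rw [← p.dropLast_support_concat, List.nodup_append] at hnodup
  rw [Walk.support_dropLast hnil]
  exact fun hv => hnodup.2.2 v hv v (List.mem_singleton_self v) rfl

end ConnectedSubsets

section ThetaModels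

variable {V : Type} {G : SimpleGraph V} {A B I J : Set V} {k r : ℕ}

lemma exists_isThetaModel {x y : Fin r → V} (hA : (G.induce A).Connected)
    (hB : (G.induce B).Connected) (hAB : Disjoint A B) (hx : ∀ i, x i ∈ A) (hy : ∀ i, y i ∈ B)
    (hxy : ∀ i, G.Adj (x i) (y i)) (hinj : y.Injective) :
    ∃ H : G.Subgraph, IsThetaModel r G H ∧ H.verts = A ∪ B := by
  let H : G.Subgraph :=
    (⊤ : G.Subgraph).induce A ⊔ (⊤ : G.Subgraph).induce B ⊔ ⨆ i, G.subgraphOfAdj (hxy i)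
  have hverts : H.verts = A ∪ B := by
    have : ∀ i, (G.subgraphOfAdj (hxy i)).verts ⊆ A ∪ B := fun i => by
      rw [subgraphOfAdj_verts]
      grind
    simpa [H] using this
  have hcross : {e ∈ H.edgeSet | ∃ a ∈ A, ∃ b ∈ B, e = s(a, b)} =
      Set.range fun i => s(x i, y i) := by
    ext e
    constructor
    · rintro ⟨he, a, ha, b, hb, rfl⟩
      have hab : H.Adj a b := he
      simp only [H, Subgraph.sup_adj, Subgraph.induce_adj, Subgraph.iSup_adj] at hab
      rcases hab with (hab | hab) | ⟨i, hi⟩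
      · exact absurd hb (hAB.notMem_of_mem_left hab.2.1)
      · exact absurd hab.1 (hAB.notMem_of_mem_left ha)
      · exact ⟨i, hi⟩
    · rintro ⟨i, rfl⟩
      refine ⟨?_, x i, hx i, y i, hy i, rfl⟩
      exact Subgraph.sup_adj.2 (.inr (Subgraph.iSup_adj.2 ⟨i, rfl⟩))
  have hcross_inj : Function.Injective fun i => s(x i, y i) := fun i j hij => by
    have := hx i
    have := hy j
    exact hinj (by grind)
  refine ⟨H, ⟨A, B, hverts.symm, hAB,
    subgraph_induce_connected_of_le hA (le_sup_left.trans le_sup_left),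
    subgraph_induce_connected_of_le hB (le_sup_right.trans le_sup_left), ?_⟩, hverts⟩
  rw [hcross, Set.ncard_range_of_injective hcross_inj, Nat.card_fin]

/-- Attaching to `I` all of the paths but their last vertices yields one side of the model; the
other side is `J`, and the crossing edges are the last edges of the paths. -/
lemma Linkage.exists_isThetaModel (L : Linkage G A B (Fin r)) (hI : (G.induce I).Connected)
    (hJ : (G.induce J).Connected) (hIJ : Disjoint I J) (hJB : J ⊆ B) (hsrc : ∀ i, L.src i ∈ I)
    (htgt : ∀ i, L.tgt i ∈ J) :
    ∃ H : G.Subgraph, IsThetaModel r G H ∧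
      H.verts ⊆ I ∪ J ∪ {v | ∃ i, v ∈ (L.walk i).support} := by
  have hnil : ∀ i, ¬ (L.walk i).Nil := fun i =>
    Walk.not_nil_of_ne (hIJ.ne_of_mem (hsrc i) (htgt i))
  have hsub : ∀ i, (L.walk i).dropLast.support ⊆ (L.walk i).support := fun i => by
    rw [Walk.support_dropLast (hnil i)]
    exact List.dropLast_subset _
  have hdisj : Disjoint (I ∪ {v | ∃ i, v ∈ (L.walk i).dropLast.support}) J := by
    refine hIJ.union_left (Set.disjoint_left.2 ?_)
    rintro v ⟨i, hv⟩ hvJ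
    obtain rfl := L.eq_tgt (hsub i hv) (hJB hvJ)
    exact end_notMem_support_dropLast (L.isPath i) (hnil i) hv
  obtain ⟨H, hH, hverts⟩ := _root_.exists_isThetaModel
    (induce_union_support_connected (fun i => (L.walk i).dropLast) hI hsrc) hJ hdisj
    (fun i => .inr ⟨i, Walk.end_mem_support _⟩) htgt
    (fun i => Walk.adj_penultimate (hnil i)) L.tgt_injective
  refine ⟨H, hH, ?_⟩
  rw [hverts]
  rintro v ((hv | ⟨i, hv⟩) | hv)
  · exact .inl (.inl hv)
  · exact .inr ⟨i, hsub i hv⟩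
  · exact .inl (.inr hv)

theorem Linkage.hasVertexPacking (L : Linkage G A B (Fin k × Fin r)) (hAB : Disjoint A B)
    {I J : Fin k → Set V} (hI : ∀ t, (G.induce (I t)).Connected)
    (hJ : ∀ t, (G.induce (J t)).Connected) (hIA : ∀ t, I t ⊆ A) (hJB : ∀ t, J t ⊆ B)
    (hI_disj : Pairwise (Function.onFun Disjoint I))
    (hJ_disj : Pairwise (Function.onFun Disjoint J))
    (hsrc : ∀ t i, L.src (t, i) ∈ I t) (htgt : ∀ t i, L.tgt (t, i) ∈ J t) :
    HasVertexPacking r G k := by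
  choose H hH hverts using fun t => (L.reindex (.sectR t (Fin r))).exists_isThetaModel (hI t) (hJ t)
    (hAB.mono (hIA t) (hJB t)) (hJB t) (hsrc t) (htgt t)
  refine ⟨H, hH, fun t u htu => Set.disjoint_left.2 fun v hvt hvu => ?_⟩
  have hI_support : ∀ t u i, v ∈ I t → v ∈ (L.walk (u, i)).support → v ∈ I u :=
    fun t u i hv hvu => L.eq_src hvu (hIA t hv) ▸ hsrc u i
  have hJ_support : ∀ t u i, v ∈ J t → v ∈ (L.walk (u, i)).support → v ∈ J u :=
    fun t u i hv hvu => L.eq_tgt hvu (hJB t hv) ▸ htgt u i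
  have hI_ne := Set.disjoint_left.1 (hI_disj htu)
  have hJ_ne := Set.disjoint_left.1 (hJ_disj htu)
  have hAB' := Set.disjoint_left.1 hAB
  rcases hverts t hvt with (hvt | hvt) | ⟨i, hvt⟩ <;>
    rcases hverts u hvu with (hvu | hvu) | ⟨j, hvu⟩
  · exact hI_ne hvt hvu
  · exact hAB' (hIA t hvt) (hJB u hvu)
  · exact hI_ne hvt (hI_support t u j hvt hvu)
  · exact hAB' (hIA u hvu) (hJB t hvt)
  · exact hJ_ne hvt hvu
  · exact hJ_ne hvt (hJ_support t u j hvt hvu)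
  · exact hI_ne (hI_support u t i hvu hvt) hvu
  · exact hJ_ne (hJ_support u t i hvu hvt) hvu
  · exact htu (congrArg Prod.fst (L.eq_of_mem_support hvt hvu))

end ThetaModels

/-! ### Blocks of a linkage between two segments -/

section OrdHull

variable {α κ ρ : Type*} [Preorder α] {s t : Set α}

/-- The order-convex hull of `s`: the smallest order-connected set containing `s`. Applied to the
positions on a path where a block of paths ends, it gives the interval that the block spans. -/
def ordHull (s : Set α) : Set α := ↑(upperClosure s) ∩ ↑(lowerClosure s)

lemma subset_ordHull : s ⊆ ordHull s :=
  Set.subset_inter subset_upperClosure subset_lowerClosure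

lemma ordConnected_ordHull : (ordHull s).OrdConnected :=
  (upperClosure s).upper.ordConnected.inter (lowerClosure s).lower.ordConnected

lemma ordHull_subset (ht : t.OrdConnected) (hst : s ⊆ t) : ordHull s ⊆ t := by
  rintro x ⟨⟨a, ha, hax⟩, b, hb, hxb⟩
  exact ht.out (hst ha) (hst hb) ⟨hax, hxb⟩

lemma disjoint_ordHull (h : ∀ a ∈ s, ∀ b ∈ t, a < b) : Disjoint (ordHull s) (ordHull t) := by
  refine Set.disjoint_left.2 ?_
  rintro x ⟨-, a, ha, hxa⟩ ⟨⟨b, hb, hbx⟩, -⟩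
  exact (h a ha b hb).not_ge (hbx.trans hxa)

lemma pairwise_disjoint_ordHull_block [LinearOrder κ] [Preorder ρ] {f : κ ×ₗ ρ → α}
    (hf : StrictMono f ∨ StrictAnti f) :
    Pairwise (Function.onFun Disjoint fun t => ordHull (Set.range fun i => f (toLex (t, i)))) := by
  refine (Std.Symm.pairwise_on (r := Disjoint) _).2 fun t u htu => ?_
  have hlt : ∀ i j : ρ, toLex (t, i) < toLex (u, j) := fun _ _ =>
    Prod.Lex.toLex_lt_toLex.2 (.inl htu)
  rcases hf with hf | hf
  · exact disjoint_ordHull (by rintro _ ⟨i, rfl⟩ _ ⟨j, rfl⟩; exact hf (hlt i j))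
  · exact (disjoint_ordHull (by rintro _ ⟨i, rfl⟩ _ ⟨j, rfl⟩; exact hf (hlt j i))).symm

end OrdHull

section PathIntervals

variable {V : Type*} {G : SimpleGraph V} {M N : Set ℕ} {a b : V} {p : G.Walk a b}

lemma induce_image_getVert_connected (hne : M.Nonempty) (hM : M.OrdConnected)
    (hle : M ⊆ Set.Iic p.length) : (G.induce (p.getVert '' M)).Connected := by
  have hreach : ∀ x ∈ M, ∀ y, x ≤ y → y ∈ M →
      ReachableIn G (p.getVert '' M) (p.getVert x) (p.getVert y) := by
    intro x hx y hxy
    induction y, hxy using Nat.le_induction with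
    | base => exact fun _ => .refl ⟨x, hx, rfl⟩
    | succ y hxy ih =>
      intro hy
      have hyM : y ∈ M := hM.out hx hy ⟨hxy, y.le_succ⟩
      exact (ih hyM).trans (.of_adj (p.adj_getVert_succ (hle hy)) ⟨y, hyM, rfl⟩ ⟨_, hy, rfl⟩)
  obtain ⟨x, hx⟩ := hne
  refine induce_connected_of_reachableIn ⟨x, hx, rfl⟩ ?_
  rintro _ ⟨y, hy, rfl⟩
  exact (le_total x y).elim (hreach x hx y · hy) fun hyx => (hreach y hy x hyx hx).symm

lemma disjoint_image_getVert (hp : p.IsPath) (hM : M ⊆ Set.Iic p.length)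
    (hN : N ⊆ Set.Iic p.length) (hMN : Disjoint M N) :
    Disjoint (p.getVert '' M) (p.getVert '' N) :=
  Set.disjoint_image_image fun _ hx _ hy hxy =>
    hMN.ne_of_mem hx hy (hp.getVert_injOn (hM hx) (hN hy) hxy)

end PathIntervals

section Segments

variable {V : Type} {G : SimpleGraph V} {k r : ℕ} {M N : Set ℕ} {a b : V} {p : G.Walk a b}

/-- Each block of `r` consecutive paths is completed by the intervals that its ends span. -/
lemma Linkage.hasVertexPacking_of_monotone (hp : p.IsPath) (hM : M.OrdConnected)
    (hN : N.OrdConnected) (hMp : M ⊆ Set.Iic p.length) (hNp : N ⊆ Set.Iic p.length)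
    (hMN : Disjoint M N) (L : Linkage G (p.getVert '' M) (p.getVert '' N) (Fin k ×ₗ Fin r))
    (hr : 0 < r) {f g : Fin k ×ₗ Fin r → ℕ} (hfM : ∀ i, f i ∈ M) (hgN : ∀ i, g i ∈ N)
    (hsrc : ∀ i, p.getVert (f i) = L.src i) (htgt : ∀ i, p.getVert (g i) = L.tgt i)
    (hf : StrictMono f ∨ StrictAnti f) (hg : StrictMono g ∨ StrictAnti g) :
    HasVertexPacking r G k := by
  let block (h : Fin k ×ₗ Fin r → ℕ) (t : Fin k) : Set ℕ :=
    ordHull (Set.range fun i => h (toLex (t, i)))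
  have hmem : ∀ h t i, h (toLex (t, i)) ∈ block h t := fun h t i => subset_ordHull ⟨i, rfl⟩
  have hblock_M : ∀ t, block f t ⊆ M := fun t =>
    ordHull_subset hM (Set.range_subset_iff.2 fun _ => hfM _)
  have hblock_N : ∀ t, block g t ⊆ N := fun t =>
    ordHull_subset hN (Set.range_subset_iff.2 fun _ => hgN _)
  exact (L.reindex toLex.toEmbedding).hasVertexPacking (disjoint_image_getVert hp hMp hNp hMN)
    (I := fun t => p.getVert '' block f t) (J := fun t => p.getVert '' block g t)
    (fun t => induce_image_getVert_connected ⟨_, hmem f t ⟨0, hr⟩⟩ ordConnected_ordHull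
      ((hblock_M t).trans hMp))
    (fun t => induce_image_getVert_connected ⟨_, hmem g t ⟨0, hr⟩⟩ ordConnected_ordHull
      ((hblock_N t).trans hNp))
    (fun t => Set.image_mono (hblock_M t)) (fun t => Set.image_mono (hblock_N t))
    (fun t u htu => disjoint_image_getVert hp ((hblock_M t).trans hMp) ((hblock_M u).trans hMp)
      (pairwise_disjoint_ordHull_block hf htu))
    (fun t u htu => disjoint_image_getVert hp ((hblock_N t).trans hNp) ((hblock_N u).trans hNp)
      (pairwise_disjoint_ordHull_block hg htu))
    (fun t i => ⟨_, hmem f t i, hsrc _⟩) (fun t i => ⟨_, hmem g t i, htgt _⟩)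

theorem Linkage.hasVertexPacking_of_sq_le_card {ι : Type*} [Fintype ι] (hp : p.IsPath)
    (hM : M.OrdConnected) (hN : N.OrdConnected) (hMp : M ⊆ Set.Iic p.length)
    (hNp : N ⊆ Set.Iic p.length) (hMN : Disjoint M N)
    (L : Linkage G (p.getVert '' M) (p.getVert '' N) ι) (hr : 0 < r)
    (hcard : (k * r) ^ 2 ≤ Fintype.card ι) : HasVertexPacking r G k := by
  choose f hfM hsrc using L.src_mem
  choose g hgN htgt using L.tgt_mem
  have hf : f.Injective := fun i j hij => L.src_injective (by rw [← hsrc, ← hsrc, hij])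
  have hg : g.Injective := fun i j hij => L.tgt_injective (by rw [← htgt, ← htgt, hij])
  obtain ⟨e, he, hge⟩ := exists_comp_strictMono_or_strictAnti_of_sq_le_card
    (κ := Fin k ×ₗ Fin r) hf hg (by simpa using hcard)
  exact (L.reindex ⟨e, he.injective.of_comp⟩).hasVertexPacking_of_monotone hp hM hN hMp hNp hMN hr
    (fun _ => hfM _) (fun _ => hgN _) (fun _ => hsrc _) (fun _ => htgt _) (.inl he) hge

end Segments

/-- If G has treewidth at least 2k²r² (every tree decomposition has a bag of size
larger than 2k²r², i.e. width at least 2k²r²) then G contains k pairwise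
vertex-disjoint models of θ_r. -/
theorem stmt4 {V : Type} [Fintype V] (G : SimpleGraph V) (k r : ℕ) (hk : 0 < k) (hr : 0 < r)
    (htw : ∀ (ι : Type) (D : TreeDecomp G ι), ∃ i, 2 * k ^ 2 * r ^ 2 < (D.bag i).ncard) :
    HasVertexPacking r G k := by
  obtain ⟨F, hF, hord⟩ := exists_isBramble_of_forall_treeDecomp htw
  obtain ⟨a, b, p, s, hp, hs, ⟨L⟩⟩ :=
    hF.exists_linked_segments (m := (k * r) ^ 2) (by positivity) fun X hX => hord X (by grind)
  exact L.hasVertexPacking_of_sq_le_card hp Set.ordConnected_Iic Set.ordConnected_Ioc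
    (Set.Iic_subset_Iic.2 hs) (fun _ hx => hx.2) (Set.Iic_disjoint_Ioc le_rfl) hr (by simp)
end

section
/- Let r ≥ 2 and suppose f : ℕ → ℕ is a function such that every graph with at most k vertex-disjoint θ_r-models has a set of at most f(k) vertices meeting every θ_r-model. Then every graph with fewer than k edge-disjoint θ_r-models has a set of at most 2kr·f(k) edges meeting every θ_r-model. -/
open SimpleGraph

/-- `G` contains `k` pairwise edge-disjoint models of `θ_r`. -/
def HasEdgePacking {V : Type} (r : ℕ) (G : SimpleGraph V) (k : ℕ) : Prop :=
  ∃ H : Fin k → G.Subgraph, (∀ i, IsThetaModel r G (H i)) ∧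
    ∀ i j, i ≠ j → Disjoint (H i).edgeSet (H j).edgeSet

/-!
Let `G` have fewer than `k` edge-disjoint `θ_r`-models, and apply the vertex version to the disjoint
union of the blocks of `G`. Blocks share no edges, so vertex-disjoint models in this union are
edge-disjoint in `G`. It has degrees at most `2kr`: if `v` has at least `2kr` neighbours in a block
`S`, then the connected graph `G[S \ {v}]` can be peeled into `k` edge-disjoint connected pieces,
each with at least `r` and fewer than `2r` new neighbours of `v`, and each piece together with `v`
contains a `θ_r`-model. Hence the edges incident to a vertex hitting set of size `N` form an edge
hitting set of size at most `2kr·N`. It also hits all models in `G`, because a model with minimal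
branch sets is 2-connected or a single edge and therefore lies in one block.
-/

section Connectivity

variable {V : Type*} {G : SimpleGraph V}

lemma connected_induce_singleton {v : V} : (G.induce {v}).Connected :=
  (connected_iff _).2 ⟨.of_subsingleton, inferInstance⟩

/- The map collapsing `X` onto `v` sends every edge of `G[A]` to an edge of `G[A \ X]` or to a
single vertex. -/
lemma connected_induce_diff_of_attached {A X : Set V} {v : V} (hA : (G.induce A).Connected)
    (hv : v ∈ A \ X) (hX : ∀ x ∈ A ∩ X, ∀ y ∈ A \ X, G.Adj x y → y = v) :
    (G.induce (A \ X)).Connected := by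
  classical
  let collapse : A → ↥(A \ X) := fun a => if h : a.1 ∈ X then ⟨v, hv⟩ else ⟨a, a.2, h⟩
  have reachable_of_adj : ∀ a b, (G.induce A).Adj a b →
      (G.induce (A \ X)).Reachable (collapse a) (collapse b) := by
    rintro ⟨a, ha⟩ ⟨b, hb⟩ (hab : G.Adj a b)
    by_cases haX : a ∈ X <;> by_cases hbX : b ∈ X <;> simp only [collapse, haX, hbX, dite_true,
      dite_false]
    · exact .rfl
    · simp [hX a ⟨ha, haX⟩ b ⟨hb, hbX⟩ hab]
    · simp [hX b ⟨hb, hbX⟩ a ⟨ha, haX⟩ hab.symm]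
    · exact Adj.reachable hab
  have collapse_eq : ∀ x : ↥(A \ X), collapse ⟨x, x.2.1⟩ = x := fun x => dif_neg x.2.2
  refine (connected_iff _).2 ⟨fun x y => ?_, ⟨⟨v, hv⟩⟩⟩
  rw [← collapse_eq x, ← collapse_eq y]
  simp only [reachable_iff_reflTransGen] at reachable_of_adj ⊢
  exact Relation.ReflTransGen.lift' collapse reachable_of_adj _ _
    ((reachable_iff_reflTransGen _ _).1 (hA _ _))

lemma connected_induce_insert {T : Set V} {x y : V} (hT : (G.induce T).Connected) (hx : x ∈ T)
    (hxy : G.Adj x y) : (G.induce (insert y T)).Connected := by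
  rw [Set.insert_eq, Set.union_comm]
  exact connected_induce_union hT.preconnected .of_subsingleton hx (Set.mem_singleton y) hxy

lemma exists_connected_adj_closed {B U : Set V} (hB : (G.induce B).Connected) (hBU : B ⊆ U) :
    ∃ T, B ⊆ T ∧ T ⊆ U ∧ (G.induce T).Connected ∧ ∀ x ∈ T, ∀ y ∈ U, G.Adj x y → y ∈ T := by
  let 𝒞 : Set (Set V) := {C | B ⊆ C ∧ C ⊆ U ∧ (G.induce C).Connected}
  have hB𝒞 : B ∈ 𝒞 := ⟨subset_rfl, hBU, hB⟩
  obtain ⟨b, hb⟩ := hB.nonempty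
  refine ⟨⋃₀ 𝒞, Set.subset_sUnion_of_mem hB𝒞, Set.sUnion_subset fun C hC => hC.2.1,
    induce_sUnion_connected_of_pairwise_not_disjoint ⟨B, hB𝒞⟩
      (fun hC hC' => ⟨b, hC.1 hb, hC'.1 hb⟩) (fun hC => hC.2.2), ?_⟩
  rintro x ⟨C, ⟨hBC, hCU, hC⟩, hxC⟩ y hyU hxy
  exact ⟨insert y C, ⟨hBC.trans (Set.subset_insert y C), Set.insert_subset hyU hCU,
    connected_induce_insert hC hxC hxy⟩, Set.mem_insert y C⟩

lemma exists_adj_of_connected_induce {P : Set V} {c : V} (hP : (G.induce P).Connected)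
    (hc : c ∈ P) (hPc : P.Nontrivial) : ∃ d ∈ P, G.Adj c d := by
  have := hPc.coe_sort
  obtain ⟨d, hd⟩ := hP.preconnected.exists_adj_of_nontrivial ⟨c, hc⟩
  exact ⟨d, d.2, hd⟩

lemma exists_connected_connected_diff {P : Set V} {c : V} (hP : (G.induce P).Connected)
    (hc : c ∈ P) (hPc : P.Nontrivial) :
    ∃ R ⊆ P \ {c}, ∃ d ∈ R, G.Adj c d ∧ (G.induce R).Connected ∧
      (G.induce (P \ R)).Connected := by
  obtain ⟨d, hdP, hcd⟩ := exists_adj_of_connected_induce hP hc hPc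
  obtain ⟨R, hdR, hRP, hR, closed⟩ := exists_connected_adj_closed (G := G) (B := {d})
    (U := P \ {c}) connected_induce_singleton
    (Set.singleton_subset_iff.2 ⟨hdP, hcd.ne'⟩)
  refine ⟨R, hRP, d, hdR rfl, hcd, hR,
    connected_induce_diff_of_attached hP ⟨hc, fun h => (hRP h).2 rfl⟩ ?_⟩
  rintro x ⟨-, hxR⟩ y ⟨hyP, hyR⟩ hxy
  by_contra hyc
  exact hyR (closed x hxR y ⟨hyP, hyc⟩ hxy)

/-- `P` and `Q` are connected, cover `S`, and share only the vertex `c`, so that the graphs they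
induce are edge-disjoint. -/
structure IsConnectedSplit (G : SimpleGraph V) (S P Q : Set V) (c : V) : Prop where
  left : (G.induce P).Connected
  right : (G.induce Q).Connected
  union_eq : P ∪ Q = S
  inter_eq : P ∩ Q = {c}

lemma IsConnectedSplit.exists_ssubset {S P Q : Set V} {c : V}
    (h : IsConnectedSplit G S P Q c) (hP : P.Nontrivial) :
    ∃ P₁ P₂, P₁ ∪ P₂ = P ∧ P₁ ⊂ P ∧ P₂ ⊂ P ∧
      (∃ Q₁ c₁, IsConnectedSplit G S P₁ Q₁ c₁) ∧ ∃ Q₂ c₂, IsConnectedSplit G S P₂ Q₂ c₂ := by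
  obtain ⟨hPconn, hQ, rfl, hPQ⟩ := h
  obtain ⟨hcP, hcQ⟩ : c ∈ P ∩ Q := hPQ ▸ rfl
  obtain ⟨R, hRP, d, hdR, hcd, hR, hPR⟩ := exists_connected_connected_diff hPconn hcP hP
  have hcPR : c ∈ P \ R := ⟨hcP, fun h => (hRP h).2 rfl⟩
  have hQPR : (G.induce (Q ∪ P \ R)).Connected :=
    induce_union_connected hQ.preconnected hPR.preconnected ⟨c, hcQ, hcPR⟩
  refine ⟨P \ R, R, by grind, by grind, by grind,
    ⟨Q ∪ R, c, hPR, connected_induce_union hQ.preconnected hR.preconnected hcQ hdR hcd,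
      by grind, by grind⟩,
    insert d (Q ∪ P \ R), d, hR, connected_induce_insert hQPR (.inl hcQ) hcd, by grind, by grind⟩

/- Minimality of `P` bounds its number of terminals: otherwise one of the two smaller pieces into
which `P` splits at the shared vertex would still contain `r` terminals. -/
lemma exists_isConnectedSplit_ncard [Finite V] {r : ℕ} (hr : 0 < r) {S M : Set V}
    (hS : (G.induce S).Connected) (hM : r ≤ (M ∩ S).ncard) :
    ∃ P Q c, IsConnectedSplit G S P Q c ∧ r ≤ (M ∩ P).ncard ∧ (M ∩ P).ncard < 2 * r := by
  obtain ⟨c₀, hc₀⟩ := hS.nonempty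
  have trivial_split : IsConnectedSplit G S S {c₀} c₀ :=
    ⟨hS, connected_induce_singleton, by grind, by grind⟩
  obtain ⟨P, -, ⟨⟨Q, c, hsplit⟩, hrP⟩, hmin⟩ := exists_minimal_le_of_wellFoundedLT
    (fun P => (∃ Q c, IsConnectedSplit G S P Q c) ∧ r ≤ (M ∩ P).ncard) S
    ⟨⟨_, _, trivial_split⟩, hM⟩
  refine ⟨P, Q, c, hsplit, hrP, ?_⟩
  rcases P.subsingleton_or_nontrivial with hP | hP
  · have : (M ∩ P).ncard ≤ 1 :=
      Set.ncard_le_one_iff_subsingleton.2 (hP.anti Set.inter_subset_right)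
    lia
  obtain ⟨P₁, P₂, hP₁₂, hP₁, hP₂, hsplit₁, hsplit₂⟩ := hsplit.exists_ssubset hP
  have hlt₁ : (M ∩ P₁).ncard < r := not_le.1 fun h => hP₁.2 (hmin ⟨hsplit₁, h⟩ hP₁.1)
  have hlt₂ : (M ∩ P₂).ncard < r := not_le.1 fun h => hP₂.2 (hmin ⟨hsplit₂, h⟩ hP₂.1)
  have := Set.ncard_union_le (M ∩ P₁) (M ∩ P₂)
  rw [← Set.inter_union_distrib_left, hP₁₂] at this
  lia

end Connectivity

section Biconnected

variable {V : Type*} {G : SimpleGraph V} {S T : Set V}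

/-- `G[S]` is 2-connected or a single edge. -/
def IsBiconnected (G : SimpleGraph V) (S : Set V) : Prop :=
  (G.induce S).Connected ∧ ∀ v ∈ S, (G.induce (S \ {v})).Connected

lemma IsBiconnected.connected_diff_singleton (hS : IsBiconnected G S) (v : V) :
    (G.induce (S \ {v})).Connected := by
  by_cases hv : v ∈ S
  · exact hS.2 v hv
  · rw [Set.sdiff_singleton_eq_self hv]
    exact hS.1

lemma IsBiconnected.union (hS : IsBiconnected G S) (hT : IsBiconnected G T)
    (hST : (S ∩ T).Nontrivial) : IsBiconnected G (S ∪ T) := by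
  refine ⟨induce_union_connected hS.1.preconnected hT.1.preconnected hST.nonempty,
    fun v _ => ?_⟩
  obtain ⟨w, ⟨hwS, hwT⟩, hwv⟩ := hST.exists_ne v
  rw [Set.union_sdiff_distrib]
  exact induce_union_connected (hS.connected_diff_singleton v).preconnected
    (hT.connected_diff_singleton v).preconnected ⟨w, ⟨hwS, hwv⟩, hwT, hwv⟩

/-- `S` is the vertex set of a block of `G`, where isolated vertices do not count as blocks. -/
def IsBlock (G : SimpleGraph V) (S : Set V) : Prop :=
  Maximal (IsBiconnected G) S

lemma IsBlock.eq_of_nontrivial_inter (hS : IsBlock G S) (hT : IsBlock G T)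
    (hST : (S ∩ T).Nontrivial) : S = T := by
  have hunion := hS.prop.union hT.prop hST
  exact (hS.eq_of_le hunion Set.subset_union_left).trans
    (hT.eq_of_le hunion Set.subset_union_right).symm

end Biconnected

section ThetaPartition

variable {V W : Type*} {F : SimpleGraph V} {r : ℕ} {A B : Set V}

/-- The edges of `F` with one end in `A` and the other in `B`. -/
def crossingEdges (F : SimpleGraph V) (A B : Set V) : Set (Sym2 V) :=
  {e ∈ F.edgeSet | ∃ a ∈ A, ∃ b ∈ B, e = s(a, b)}

lemma crossingEdges_comm : crossingEdges F A B = crossingEdges F B A := by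
  ext e
  refine and_congr_right fun _ => ⟨?_, ?_⟩ <;>
    exact fun ⟨a, ha, b, hb, he⟩ => ⟨b, hb, a, ha, he.trans Sym2.eq_swap⟩

/-- `F[A ∪ B]` is a `θ_r`-model with branch sets `A` and `B`. -/
structure IsThetaPartition (r : ℕ) (F : SimpleGraph V) (A B : Set V) : Prop where
  disjoint : Disjoint A B
  left : (F.induce A).Connected
  right : (F.induce B).Connected
  ncard_crossingEdges : (crossingEdges F A B).ncard = r

namespace IsThetaPartition

lemma symm (h : IsThetaPartition r F A B) : IsThetaPartition r F B A :=
  ⟨h.disjoint.symm, h.right, h.left, crossingEdges_comm ▸ h.ncard_crossingEdges⟩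

lemma exists_adj (h : IsThetaPartition r F A B) (hr : 0 < r) : ∃ a ∈ A, ∃ b ∈ B, F.Adj a b := by
  obtain ⟨_, he, a, ha, b, hb, rfl⟩ : (crossingEdges F A B).Nonempty :=
    Set.nonempty_of_ncard_ne_zero (h.ncard_crossingEdges.trans_ne hr.ne')
  exact ⟨a, ha, b, hb, he⟩

lemma connected_union (h : IsThetaPartition r F A B) (hr : 0 < r) :
    (F.induce (A ∪ B)).Connected := by
  obtain ⟨a, ha, b, hb, hab⟩ := h.exists_adj hr
  exact connected_induce_union h.left.preconnected h.right.preconnected ha hb hab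

lemma nontrivial_union (h : IsThetaPartition r F A B) : (A ∪ B).Nontrivial := by
  obtain ⟨⟨a, ha⟩⟩ := h.left.nonempty
  obtain ⟨⟨b, hb⟩⟩ := h.right.nonempty
  exact ⟨a, .inl ha, b, .inr hb, h.disjoint.ne_of_mem ha hb⟩

lemma of_subset_left (h : IsThetaPartition r F A B) {A' : Set V} (hA' : A' ⊆ A)
    (hconn : (F.induce A').Connected) (hadj : ∀ a ∈ A, ∀ b ∈ B, F.Adj a b → a ∈ A') :
    IsThetaPartition r F A' B := by
  refine ⟨h.disjoint.mono_left hA', hconn, h.right, ?_⟩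
  rw [← h.ncard_crossingEdges]
  congr 1
  ext e
  constructor
  · rintro ⟨he, a, ha, hb⟩
    exact ⟨he, a, hA' ha, hb⟩
  · rintro ⟨he, a, ha, b, hb, rfl⟩
    exact ⟨he, a, hadj a ha b hb he, b, hb, rfl⟩

/- The part `X` of `A` that `v` separates from `B` could be removed from `A`. -/
lemma connected_union_diff_singleton (h : IsThetaPartition r F A B)
    (hmin : ∀ A' ⊆ A, IsThetaPartition r F A' B → A' = A) {v : V} (hv : v ∈ A) :
    (F.induce ((A ∪ B) \ {v})).Connected := by
  have hvB : v ∉ B := Set.disjoint_left.1 h.disjoint hv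
  obtain ⟨T, hBT, hTU, hT, closed⟩ :=
    exists_connected_adj_closed (U := (A ∪ B) \ {v}) h.right (by grind)
  let X := A \ insert v T
  have hAX : (F.induce (A \ X)).Connected := by
    refine connected_induce_diff_of_attached h.left (v := v) (by grind) ?_
    rintro x ⟨hxA, -, hxT⟩ y ⟨hyA, hyX⟩ hxy
    by_contra hyv
    exact hxT (.inr (closed y (by grind) x (by grind) hxy.symm))
  have hAXA : A \ X = A := by
    refine hmin _ Set.sdiff_subset (h.of_subset_left Set.sdiff_subset hAX ?_)
    rintro a ha b hb hab
    refine ⟨ha, fun haX => haX.2 (.inr (closed b (hBT hb) a ?_ hab.symm))⟩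
    exact ⟨.inl ha, fun hav => haX.2 (.inl hav)⟩
  have hTeq : T = (A ∪ B) \ {v} := by
    refine hTU.antisymm ?_
    rintro x ⟨hx | hx, hxv⟩
    · have : x ∈ A \ X := hAXA.ge hx
      grind
    · exact hBT hx
  exact hTeq ▸ hT

lemma exists_isBiconnected [Finite V] (h : IsThetaPartition r F A B) (hr : 0 < r) :
    ∃ A' ⊆ A, ∃ B' ⊆ B, IsThetaPartition r F A' B' ∧ IsBiconnected F (A' ∪ B') := by
  obtain ⟨⟨A', B'⟩, ⟨hA', hB'⟩, h', hmin⟩ := exists_minimal_le_of_wellFoundedLT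
    (fun p : Set V × Set V => IsThetaPartition r F p.1 p.2) (A, B) h
  have min_left : ∀ A'' ⊆ A', IsThetaPartition r F A'' B' → A'' = A' := fun A'' hA'' h'' =>
    hA''.antisymm (hmin (y := (A'', B')) h'' ⟨hA'', le_rfl⟩).1
  have min_right : ∀ B'' ⊆ B', IsThetaPartition r F B'' A' → B'' = B' := fun B'' hB'' h'' =>
    hB''.antisymm (hmin (y := (A', B'')) h''.symm ⟨le_rfl, hB''⟩).2
  refine ⟨A', hA', B', hB', h', h'.connected_union hr, ?_⟩
  rintro v (hv | hv)
  · exact h'.connected_union_diff_singleton min_left hv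
  · rw [Set.union_comm]
    exact h'.symm.connected_union_diff_singleton min_right hv

lemma image {F' : SimpleGraph W} (h : IsThetaPartition r F A B) {φ : V → W}
    (hinj : Set.InjOn φ (A ∪ B))
    (hadj : ∀ x ∈ A ∪ B, ∀ y ∈ A ∪ B, F'.Adj (φ x) (φ y) ↔ F.Adj x y) :
    IsThetaPartition r F' (φ '' A) (φ '' B) := by
  have connected_image : ∀ C ⊆ A ∪ B, (F.induce C).Connected →
      (F'.induce (φ '' C)).Connected := by
    intro C hC hconn
    let ψ : F.induce C →g F'.induce (φ '' C) :=
      ⟨fun x => ⟨φ x, x, x.2, rfl⟩, fun {x y} => (hadj x (hC x.2) y (hC y.2)).2⟩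
    exact hconn.map ψ fun ⟨_, x, hx, hxy⟩ => ⟨⟨x, hx⟩, Subtype.ext hxy⟩
  refine ⟨?_, connected_image A Set.subset_union_left h.left,
    connected_image B Set.subset_union_right h.right, ?_⟩
  · refine Set.disjoint_image_image fun a ha b hb hab => ?_
    exact h.disjoint.ne_of_mem ha hb (hinj (.inl ha) (.inr hb) hab)
  have crossingEdges_image :
      crossingEdges F' (φ '' A) (φ '' B) = Sym2.map φ '' crossingEdges F A B := by
    ext e
    constructor
    · rintro ⟨he, _, ⟨a, ha, rfl⟩, _, ⟨b, hb, rfl⟩, rfl⟩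
      exact ⟨s(a, b), ⟨(hadj a (.inl ha) b (.inr hb)).1 he, a, ha, b, hb, rfl⟩, rfl⟩
    · rintro ⟨_, ⟨he, a, ha, b, hb, rfl⟩, rfl⟩
      exact ⟨(hadj a (.inl ha) b (.inr hb)).2 he, _, ⟨a, ha, rfl⟩, _, ⟨b, hb, rfl⟩, rfl⟩
  rw [crossingEdges_image, Set.InjOn.ncard_image, h.ncard_crossingEdges]
  rintro _ ⟨-, a, ha, b, hb, rfl⟩ _ ⟨-, c, hc, d, hd, rfl⟩ heq
  rcases Sym2.eq_iff.1 heq with ⟨hac, hbd⟩ | ⟨had, hbc⟩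
  · rw [hinj (.inl ha) (.inl hc) hac, hinj (.inr hb) (.inr hd) hbd]
  · rw [hinj (.inl ha) (.inr hd) had, hinj (.inr hb) (.inl hc) hbc, Sym2.eq_swap]

end IsThetaPartition

end ThetaPartition

section ThetaModel

variable {V W : Type} {G : SimpleGraph V} {G' : SimpleGraph W} {r : ℕ}

lemma connected_subgraph_induce_iff {H : G.Subgraph} {A : Set V} :
    (H.induce A).Connected ↔ (H.spanningCoe.induce A).Connected := by
  have : (H.induce A).coe = H.spanningCoe.induce A := by
    ext x y
    exact ⟨fun h => h.2.2, fun h => ⟨x.2, y.2, h⟩⟩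
  rw [← this]
  exact Subgraph.connected_iff'

lemma isThetaModel_iff {H : G.Subgraph} : IsThetaModel r G H ↔
    ∃ A B : Set V, A ∪ B = H.verts ∧ IsThetaPartition r H.spanningCoe A B := by
  simp only [IsThetaModel, connected_subgraph_induce_iff]
  constructor <;> exact fun ⟨A, B, hAB, hdisj, hA, hB, hcross⟩ =>
    ⟨A, B, hAB, hdisj, hA, hB, hcross⟩

/-- The image of a subgraph `H` of `G` under a homomorphism into `G'` defined on the edges of `H`
only. -/
def subgraphImage (H : G.Subgraph) (φ : H.spanningCoe →g G') : G'.Subgraph where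
  verts := φ '' H.verts
  Adj := Relation.Map H.Adj φ φ
  adj_sub := by
    rintro _ _ ⟨x, y, hxy, rfl, rfl⟩
    exact φ.map_adj hxy
  edge_vert := by
    rintro _ _ ⟨x, y, hxy, rfl, rfl⟩
    exact ⟨x, hxy.fst_mem, rfl⟩
  symm := ⟨by
    rintro _ _ ⟨x, y, hxy, rfl, rfl⟩
    exact ⟨y, x, hxy.symm, rfl, rfl⟩⟩

lemma edgeSet_subgraphImage (H : G.Subgraph) (φ : H.spanningCoe →g G') :
    (subgraphImage H φ).edgeSet = Sym2.map φ '' H.edgeSet := by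
  ext e
  constructor
  · induction e using Sym2.ind with
    | _ u w =>
      rintro ⟨x, y, hxy, rfl, rfl⟩
      exact ⟨s(x, y), hxy, rfl⟩
  · rintro ⟨e, he, rfl⟩
    induction e using Sym2.ind with
    | _ x y => exact ⟨x, y, he, rfl, rfl⟩

namespace IsThetaModel

lemma image {H : G.Subgraph} (hH : IsThetaModel r G H) (φ : H.spanningCoe →g G')
    (hφ : Set.InjOn φ H.verts) : IsThetaModel r G' (subgraphImage H φ) := by
  obtain ⟨A, B, hAB, h⟩ := isThetaModel_iff.1 hH
  refine isThetaModel_iff.2 ⟨φ '' A, φ '' B, ?_, h.image (hAB ▸ hφ) fun x hx y hy => ⟨?_, ?_⟩⟩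
  · rw [← Set.image_union, hAB]
    rfl
  · rintro ⟨x', y', hxy', hx', hy'⟩
    rw [← hφ hxy'.fst_mem (hAB ▸ hx) hx', ← hφ hxy'.snd_mem (hAB ▸ hy) hy']
    exact hxy'
  · exact fun hxy => ⟨x, y, hxy, rfl, rfl⟩

lemma connected_induce_verts {H : G.Subgraph} (hH : IsThetaModel r G H) (hr : 0 < r) :
    (H.spanningCoe.induce H.verts).Connected := by
  obtain ⟨A, B, hAB, h⟩ := isThetaModel_iff.1 hH
  exact hAB ▸ h.connected_union hr

lemma exists_adj {H : G.Subgraph} (hH : IsThetaModel r G H) (hr : 0 < r) {v : V}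
    (hv : v ∈ H.verts) : ∃ w, H.Adj v w := by
  obtain ⟨A, B, hAB, h⟩ := isThetaModel_iff.1 hH
  obtain ⟨w, -, hvw⟩ := exists_adj_of_connected_induce (hH.connected_induce_verts hr) hv
    (hAB ▸ h.nontrivial_union)
  exact ⟨w, hvw⟩

lemma exists_le_isBiconnected [Finite V] {H : G.Subgraph} (hH : IsThetaModel r G H)
    (hr : 0 < r) : ∃ K ≤ H, IsThetaModel r G K ∧ IsBiconnected G K.verts := by
  obtain ⟨A, B, hAB, h⟩ := isThetaModel_iff.1 hH
  obtain ⟨A', hA', B', hB', h', hconn, hbiconn⟩ := h.exists_isBiconnected hr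
  have hsub : A' ∪ B' ⊆ H.verts := hAB ▸ Set.union_subset_union hA' hB'
  refine ⟨H.induce (A' ∪ B'), ⟨hsub, fun _ _ hxy => hxy.2.2⟩, isThetaModel_iff.2 ⟨A', B', rfl, ?_⟩,
    hconn.mono (comap_monotone _ H.spanningCoe_le),
    fun v hv => (hbiconn v hv).mono (comap_monotone _ H.spanningCoe_le)⟩
  simpa using h'.image (F' := (H.induce (A' ∪ B')).spanningCoe) (Set.injOn_id _)
    fun x hx y hy => ⟨fun hxy => hxy.2.2, fun hxy => ⟨hx, hy, hxy⟩⟩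

end IsThetaModel

end ThetaModel

section Fan

variable {V : Type} {G : SimpleGraph V} {r k : ℕ} {v : V}

/-- The graph `G[S]` together with `v` and the edges from `v` to `N ∩ S`. A connected set with `r`
chosen neighbours of `v` becomes in this way a `θ_r`-model with `{v}` as one branch set. -/
def fan (G : SimpleGraph V) (v : V) (S N : Set V) : G.Subgraph where
  verts := insert v S
  Adj x y := G.Adj x y ∧ (x ∈ S ∧ y ∈ S ∨ x = v ∧ y ∈ N ∩ S ∨ y = v ∧ x ∈ N ∩ S)
  adj_sub h := h.1
  edge_vert := by grind
  symm := ⟨by grind [G.adj_comm]⟩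

lemma fan_mono {S S' N N' : Set V} (hS : S ⊆ S') (hN : N ⊆ N') : fan G v S N ≤ fan G v S' N' :=
  ⟨Set.insert_subset_insert hS, by
    intro x y hxy
    simp only [fan] at hxy ⊢
    grind⟩

lemma isThetaModel_fan {S N : Set V} (hS : (G.induce S).Connected) (hv : v ∉ S) (hN : N ⊆ S)
    (hNv : N ⊆ G.neighborSet v) : IsThetaModel N.ncard G (fan G v S N) := by
  refine isThetaModel_iff.2 ⟨{v}, S, rfl, Set.disjoint_singleton_left.2 hv,
    connected_induce_singleton,
    hS.mono fun x y hxy => ⟨hxy, .inl ⟨x.2, y.2⟩⟩, ?_⟩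
  have crossingEdges_eq :
      crossingEdges (fan G v S N).spanningCoe {v} S = (fun x => s(v, x)) '' N := by
    ext e
    constructor
    · rintro ⟨he, _, rfl, b, hb, rfl⟩
      obtain ⟨-, hvb⟩ := he
      exact ⟨b, by grind, rfl⟩
    · rintro ⟨x, hx, rfl⟩
      exact ⟨⟨hNv hx, .inr (.inl ⟨rfl, hx, hN hx⟩)⟩, v, rfl, x, hN hx, rfl⟩
  rw [crossingEdges_eq, Set.ncard_image_of_injective _ fun x y => Sym2.congr_right.1]

lemma disjoint_edgeSet_fan {P Q M N : Set V} (hPQ : (P ∩ Q).Subsingleton) (hMN : Disjoint M N)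
    (hvP : v ∉ P) (hvQ : v ∉ Q) : Disjoint (fan G v P M).edgeSet (fan G v Q N).edgeSet := by
  rw [Set.disjoint_left] at hMN ⊢
  intro e
  induction e using Sym2.ind with
  | _ x y =>
    rintro ⟨hxy, hP⟩ ⟨-, hQ⟩
    have hxy' : x ≠ y := hxy.ne
    have not_both : x ∈ P ∩ Q → y ∉ P ∩ Q := fun hx hy => hxy' (hPQ hx hy)
    grind

lemma exists_edge_packing_le_fan [Finite V] (hr : 0 < r) {S M : Set V}
    (hS : (G.induce S).Connected) (hv : v ∉ S) (hM : M ⊆ S) (hMv : M ⊆ G.neighborSet v)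
    (hcard : 2 * k * r ≤ M.ncard) :
    ∃ H : Fin k → G.Subgraph, (∀ i, IsThetaModel r G (H i) ∧ H i ≤ fan G v S M) ∧
      Pairwise fun i j => Disjoint (H i).edgeSet (H j).edgeSet := by
  induction k generalizing S M with
  | zero => exact ⟨Fin.elim0, Fin.rec0, Fin.rec0⟩
  | succ k ih =>
    obtain ⟨P, Q, c, hsplit, hrP, hPr⟩ := exists_isConnectedSplit_ncard hr (M := M) hS
      (by rw [Set.inter_eq_left.2 hM]; nlinarith)
    have hPS : P ⊆ S := hsplit.union_eq ▸ Set.subset_union_left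
    have hQS : Q ⊆ S := hsplit.union_eq ▸ Set.subset_union_right
    obtain ⟨N, hN, rfl⟩ := Set.exists_subset_card_eq hrP
    have hrest : 2 * k * N.ncard ≤ (M \ P).ncard := by
      have := Set.ncard_inter_add_ncard_sdiff_eq_ncard M P
      lia
    have hMQ : M \ P ⊆ Q := fun x hx =>
      ((hsplit.union_eq.ge (hM hx.1)).resolve_left hx.2)
    obtain ⟨H, hH, hdisj⟩ := ih hsplit.right (fun h => hv (hQS h)) hMQ
      (Set.sdiff_subset.trans hMv) hrest
    have first_disjoint : ∀ i, Disjoint (fan G v P N).edgeSet (H i).edgeSet := fun i =>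
      (disjoint_edgeSet_fan (hsplit.inter_eq ▸ Set.subsingleton_singleton) (by grind)
        (fun h => hv (hPS h)) (fun h => hv (hQS h))).mono_right
          (Subgraph.edgeSet_mono (hH i).2)
    have first_model : IsThetaModel N.ncard G (fan G v P N) :=
      isThetaModel_fan hsplit.left (fun h => hv (hPS h)) (hN.trans Set.inter_subset_right)
        ((hN.trans Set.inter_subset_left).trans hMv)
    refine ⟨Fin.cons (fan G v P N) H, Fin.forall_fin_succ.2 ⟨⟨first_model, ?_⟩, fun i => ?_⟩,
      pairwise_fin_succ_iff.2 ⟨fun i => (first_disjoint i).symm, first_disjoint, hdisj⟩⟩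
    · exact fan_mono hPS (hN.trans Set.inter_subset_left)
    · exact ⟨(hH i).1, (hH i).2.trans (fan_mono hQS Set.sdiff_subset)⟩

lemma hasEdgePacking_of_le_ncard [Finite V] (hr : 0 < r) {S : Set V}
    (hS : (G.induce S).Connected) (hv : v ∉ S)
    (hcard : 2 * k * r ≤ (G.neighborSet v ∩ S).ncard) : HasEdgePacking r G k := by
  obtain ⟨H, hH, hdisj⟩ := exists_edge_packing_le_fan hr hS hv Set.inter_subset_right
    Set.inter_subset_left hcard
  exact ⟨H, fun i => (hH i).1, hdisj⟩

end Fan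

section HittingSets

variable {V : Type} {G : SimpleGraph V} {r : ℕ}

/-- Every `θ_r`-model in `G` has a vertex in `X`. -/
def IsVertexHitting (r : ℕ) (G : SimpleGraph V) (X : Set V) : Prop :=
  ∀ H : G.Subgraph, IsThetaModel r G H → ∃ v ∈ X, v ∈ H.verts

/-- Every `θ_r`-model in `G` has an edge in `Y`. -/
def IsEdgeHitting (r : ℕ) (G : SimpleGraph V) (Y : Set (Sym2 V)) : Prop :=
  ∀ H : G.Subgraph, IsThetaModel r G H → ∃ e ∈ Y, e ∈ H.edgeSet

lemma IsVertexHitting.exists_isEdgeHitting [Finite V] {X : Set V} (hX : IsVertexHitting r G X)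
    (hr : 0 < r) {d : ℕ} (hd : ∀ v, (G.neighborSet v).ncard ≤ d) :
    ∃ Y : Set (Sym2 V), Y.ncard ≤ X.ncard * d ∧ IsEdgeHitting r G Y := by
  classical
  have ncard_incidenceSet_le : ∀ v, (G.incidenceSet v).ncard ≤ d := fun v =>
    (Nat.card_congr (G.incidenceSetEquivNeighborSet v)).trans_le (hd v)
  refine ⟨⋃ v ∈ X, G.incidenceSet v, ?_, fun H hH => ?_⟩
  · calc (⋃ v ∈ X, G.incidenceSet v).ncard
        ≤ ∑ v ∈ X.toFinite.toFinset, (G.incidenceSet v).ncard := by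
          simpa using X.toFinite.toFinset.set_ncard_biUnion_le G.incidenceSet
      _ ≤ X.ncard * d := by
          rw [Set.ncard_eq_toFinset_card X, ← smul_eq_mul]
          exact Finset.sum_le_card_nsmul _ _ _ fun v _ => ncard_incidenceSet_le v
  · obtain ⟨v, hvX, hvH⟩ := hX H hH
    obtain ⟨w, hvw⟩ := hH.exists_adj hr hvH
    exact ⟨s(v, w), Set.mem_biUnion hvX ⟨hvw.adj_sub, Sym2.mem_mk_left v w⟩, hvw⟩

end HittingSets

section BlockGraph

variable {V : Type*} {G : SimpleGraph V}

/-- The disjoint union of the blocks of `G`: the vertex `(S, x)` is the copy of `x` in the block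
`S`, and pairs `(S, x)` that are not of this form are isolated vertices. -/
def blockGraph (G : SimpleGraph V) : SimpleGraph (Set V × V) where
  Adj p q := p.1 = q.1 ∧ IsBlock G p.1 ∧ p.2 ∈ p.1 ∧ q.2 ∈ q.1 ∧ G.Adj p.2 q.2
  symm := ⟨fun _ _ ⟨hpq, hblock, hp, hq, hadj⟩ => ⟨hpq.symm, hpq ▸ hblock, hq, hp, hadj.symm⟩⟩
  loopless := ⟨fun _ ⟨_, _, _, _, hadj⟩ => hadj.ne rfl⟩

/-- The homomorphism `(S, x) ↦ x` from the disjoint union of the blocks onto `G`. -/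
def blockProj (G : SimpleGraph V) : blockGraph G →g G where
  toFun := Prod.snd
  map_rel' h := h.2.2.2.2

lemma injOn_map_blockProj_edgeSet : Set.InjOn (Sym2.map (blockProj G)) (blockGraph G).edgeSet := by
  intro e he e' he' heq
  induction e using Sym2.ind with | _ p q =>
  induction e' using Sym2.ind with | _ p' q' =>
  obtain ⟨S, x⟩ := p
  obtain ⟨S₁, y⟩ := q
  obtain ⟨T, x'⟩ := p'
  obtain ⟨T₁, y'⟩ := q'
  obtain ⟨rfl : S = S₁, hS, hx, hy, hxy⟩ := he
  obtain ⟨rfl : T = T₁, hT, hx', hy', -⟩ := he'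
  have heq : s(x, y) = s(x', y') := heq
  obtain rfl : S = T := by
    refine hS.eq_of_nontrivial_inter hT ⟨x, ⟨hx, ?_⟩, y, ⟨hy, ?_⟩, hxy.ne⟩ <;> grind
  grind

lemma fst_eq_of_reachable_blockGraph {p q : Set V × V} (h : (blockGraph G).Reachable p q) :
    p.1 = q.1 := by
  rw [reachable_iff_reflTransGen] at h
  induction h with
  | refl => rfl
  | tail _ hadj ih => exact ih.trans hadj.1

lemma injOn_blockProj_verts {H : (blockGraph G).Subgraph}
    (hH : (H.spanningCoe.induce H.verts).Connected) : Set.InjOn (blockProj G) H.verts := by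
  intro p hp q hq hpq
  have hreach := ((hH ⟨p, hp⟩ ⟨q, hq⟩).map (Embedding.induce H.verts).toHom).mono H.spanningCoe_le
  exact Prod.ext (fst_eq_of_reachable_blockGraph hreach) hpq

end BlockGraph

section BlockGraphModels

variable {V : Type} {G : SimpleGraph V} {r k : ℕ}

lemma HasVertexPacking.hasEdgePacking_of_blockGraph (hr : 0 < r)
    (h : HasVertexPacking r (blockGraph G) k) : HasEdgePacking r G k := by
  obtain ⟨H, hH, hdisj⟩ := h
  let φ (i : Fin k) : (H i).spanningCoe →g G := (blockProj G).comp (.ofLE (H i).spanningCoe_le)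
  refine ⟨fun i => subgraphImage (H i) (φ i), fun i => (hH i).image (φ i)
    (injOn_blockProj_verts ((hH i).connected_induce_verts hr)), fun i j hij => ?_⟩
  simp only [edgeSet_subgraphImage]
  have edgeSet_disjoint : Disjoint (H i).edgeSet (H j).edgeSet :=
    (Subgraph.disjoint_verts_iff_disjoint.1 (hdisj i j hij)).edgeSet
  exact edgeSet_disjoint.image injOn_map_blockProj_edgeSet (H i).edgeSet_subset (H j).edgeSet_subset

lemma ncard_neighborSet_blockGraph_le [Finite V] (hr : 0 < r) (hk : ¬HasEdgePacking r G k)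
    (p : Set V × V) : ((blockGraph G).neighborSet p).ncard ≤ 2 * k * r := by
  by_contra! hcard
  obtain ⟨q, hq⟩ := Set.nonempty_of_ncard_ne_zero (Nat.ne_zero_of_lt hcard)
  have hblock : IsBlock G p.1 := hq.2.1
  refine hk (hasEdgePacking_of_le_ncard (v := p.2) hr (hblock.prop.connected_diff_singleton p.2)
    (fun h => h.2 rfl) (hcard.le.trans ?_))
  refine Set.ncard_le_ncard_of_injOn Prod.snd ?_ ?_
  · rintro ⟨_, x⟩ ⟨rfl, -, -, hx, hadj⟩
    exact ⟨hadj, hx, hadj.ne'⟩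
  · rintro x hx y hy hxy
    exact Prod.ext (hx.1.symm.trans hy.1) hxy

lemma IsEdgeHitting.image_blockProj [Finite V] (hr : 0 < r) {Y : Set (Sym2 (Set V × V))}
    (hY : IsEdgeHitting r (blockGraph G) Y) :
    IsEdgeHitting r G (Sym2.map (blockProj G) '' Y) := by
  intro H hH
  obtain ⟨K, hKH, hK, hbiconn⟩ := hH.exists_le_isBiconnected hr
  obtain ⟨S, hKS, hS⟩ : ∃ S, K.verts ⊆ S ∧ IsBlock G S :=
    exists_maximal_ge_of_wellFoundedGT (IsBiconnected G) K.verts hbiconn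
  let φ : K.spanningCoe →g blockGraph G :=
    ⟨fun x => (S, x), fun {x y} hxy =>
      ⟨rfl, hS, hKS hxy.fst_mem, hKS hxy.snd_mem, K.adj_sub hxy⟩⟩
  have lift_model := hK.image φ fun x _ y _ hxy => congrArg Prod.snd hxy
  obtain ⟨e, heY, heK⟩ := hY _ lift_model
  refine ⟨_, ⟨e, heY, rfl⟩, Subgraph.edgeSet_mono hKH ?_⟩
  rw [edgeSet_subgraphImage] at heK
  obtain ⟨e, he, rfl⟩ := heK
  have : Sym2.map (blockProj G) (Sym2.map φ e) = e := by
    rw [Sym2.map_map]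
    exact congrFun Sym2.map_id e
  rwa [this]

lemma HasVertexPacking.of_succ (h : HasVertexPacking r G (k + 1)) : HasVertexPacking r G k := by
  obtain ⟨H, hH, hdisj⟩ := h
  exact ⟨fun i => H i.castSucc, fun i => hH _,
    fun i j hij => hdisj _ _ (Fin.castSucc_injective k |>.ne hij)⟩

end BlockGraphModels

theorem stmt10_general {r k N : ℕ} (hr : 0 < r)
    (hN : ∀ (W : Type) [Fintype W] (G : SimpleGraph W), ¬HasVertexPacking r G k →
      ∃ X : Set W, X.ncard ≤ N ∧
        ∀ H : G.Subgraph, IsThetaModel r G H → ∃ v ∈ X, v ∈ H.verts)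
    {V : Type} [Finite V] {G : SimpleGraph V} (hk : ¬HasEdgePacking r G k) :
    ∃ Y : Set (Sym2 V), Y.ncard ≤ 2 * k * r * N ∧
      ∀ H : G.Subgraph, IsThetaModel r G H → ∃ e ∈ Y, e ∈ H.edgeSet := by
  have := Fintype.ofFinite (Set V × V)
  obtain ⟨X, hXN, hX⟩ := hN _ (blockGraph G)
    (mt (HasVertexPacking.hasEdgePacking_of_blockGraph hr) hk)
  obtain ⟨Y, hYX, hY⟩ := IsVertexHitting.exists_isEdgeHitting hX hr
    (ncard_neighborSet_blockGraph_le hr hk)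
  refine ⟨_, ?_, hY.image_blockProj hr⟩
  calc (Sym2.map (blockProj G) '' Y).ncard
      ≤ Y.ncard := Set.ncard_image_le
    _ ≤ X.ncard * (2 * k * r) := hYX
    _ ≤ N * (2 * k * r) := by gcongr
    _ = 2 * k * r * N := mul_comm _ _

/-- If every graph with at most k vertex-disjoint θ_r-models has a set of at most f(k)
vertices meeting every θ_r-model, then every graph with fewer than k edge-disjoint
θ_r-models has a set of at most 2kr·f(k) edges meeting every θ_r-model. -/
theorem stmt10 (r : ℕ) (hr : 2 ≤ r) (f : ℕ → ℕ)
    (hf : ∀ (W : Type) [Fintype W] (G : SimpleGraph W) (k : ℕ),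
      ¬ HasVertexPacking r G (k + 1) →
      ∃ X : Set W, X.ncard ≤ f k ∧
        ∀ H : G.Subgraph, IsThetaModel r G H → ∃ v ∈ X, v ∈ H.verts) :
    ∀ (W : Type) [Fintype W] (G : SimpleGraph W) (k : ℕ),
      ¬ HasEdgePacking r G k →
      ∃ Y : Set (Sym2 W), Y.ncard ≤ 2 * k * r * f k ∧
        ∀ H : G.Subgraph, IsThetaModel r G H → ∃ e ∈ Y, e ∈ H.edgeSet := by
  intro _ _ _ k hk
  exact stmt10_general (by lia) (fun W _ G h => hf W G k (mt HasVertexPacking.of_succ h)) hk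
end
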